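/- Let K be an algebraically closed field, let (τ_n) be a Zariski geometry on K such that every Zariski-closed subset of K^n is τ_n-closed, and let C ⊆ K² be a τ_2-closed irreducible set of dimension 1 whose degree is m, i.e., there is a nonempty Zariski-open set U ⊆ K² such that for every (a,b) ∈ U the set C ∩ {(x,y) : y = a·x + b} has exactly m elements. Then for every nonzero polynomial f ∈ K[X,Y] of total degree d, if the set C ∩ {p ∈ K² : f(p) = 0} is finite, then it has at most d·m elements. -/

import Mathlib

open Topology

/-- A subset of `K^n` is *Zariski-closed* (an affine algebraic set) if it is the common
zero set of a set of polynomials in `n` variables. -/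
def ZariskiClosedSet (K : Type*) [Field K] {n : ℕ} (C : Set (Fin n → K)) : Prop :=
  ∃ S : Set (MvPolynomial (Fin n) K), C = {x | ∀ f ∈ S, MvPolynomial.eval x f = 0}

/-- The Zariski topology on `K^n`: the topology whose closed sets are the affine
algebraic sets. -/
def zariskiTopology (K : Type*) [Field K] (n : ℕ) : TopologicalSpace (Fin n → K) :=
  TopologicalSpace.generateFrom {U | ZariskiClosedSet K Uᶜ}

/-- The dimension of a subset `S` of a topological space: the topological Krull
dimension of `S` with the subspace topology (the maximal length of a chain of
irreducible closed subsets). -/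
noncomputable def setKrullDim {X : Type*} (t : TopologicalSpace X) (S : Set X) : WithBot ℕ∞ :=
  @topologicalKrullDim S (t.induced Subtype.val)

/-- `T` is an irreducible component of `S` (w.r.t. the topology `t`) if `T` is a maximal
irreducible subset of `S`. -/
def IsIrredComponentOf {X : Type*} (t : TopologicalSpace X) (T S : Set X) : Prop :=
  Maximal (fun T => T ⊆ S ∧ @IsIrreducible X t T) T

/-- A *Zariski geometry* on a set `X`: a Noetherian topology on each Cartesian power
`X^n` satisfying axioms (Z0)-(Z3). -/
structure ZariskiGeometry (X : Type*) where
  τ : ∀ n : ℕ, TopologicalSpace (Fin n → X)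
  noetherian : ∀ n, @TopologicalSpace.NoetherianSpace (Fin n → X) (τ n)
  /-- (Z0): every map `X^n → X^m` each of whose coordinates is a constant or a
  coordinate projection is continuous. -/
  Z0_cont : ∀ (n m : ℕ) (g : Fin m → (Fin n ⊕ X)),
    Continuous[τ n, τ m] (fun x i => Sum.elim (fun j => x j) id (g i))
  /-- (Z0): the diagonals are closed. -/
  Z0_diag : ∀ (n : ℕ) (i j : Fin n), IsClosed[τ n] {x | x i = x j}
  /-- (Z1): for a (nonempty) closed `C ⊆ X^n` and a coordinate projection
  `π : X^n → X^k`, there is a proper closed subset `F` of `cl(π C)` with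
  `cl(π C) \ F ⊆ π C`. -/
  Z1 : ∀ (n k : ℕ) (h : k ≤ n) (C : Set (Fin n → X)), IsClosed[τ n] C → C.Nonempty →
    ∃ F : Set (Fin k → X), IsClosed[τ k] F ∧
      F ⊂ closure[τ k] ((fun x => x ∘ Fin.castLE h) '' C) ∧
      closure[τ k] ((fun x => x ∘ Fin.castLE h) '' C) \ F ⊆ (fun x => x ∘ Fin.castLE h) '' C
  /-- (Z2): `X` is irreducible. -/
  Z2_irred : @IrreducibleSpace (Fin 1 → X) (τ 1)
  /-- (Z2): uniform one-dimensionality. -/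
  Z2 : ∀ (n : ℕ) (C : Set (Fin (n + 1) → X)), IsClosed[τ (n + 1)] C →
    ∃ m : ℕ, ∀ a : Fin n → X, {b : X | Fin.snoc a b ∈ C} = Set.univ ∨
      ({b : X | Fin.snoc a b ∈ C}.Finite ∧ {b : X | Fin.snoc a b ∈ C}.ncard ≤ m)
  /-- (Z3) (Dimension theorem): every irreducible component of the intersection of a
  closed irreducible `U ⊆ X^n` with a diagonal has dimension `≥ dim U - 1`. -/
  Z3 : ∀ (n : ℕ) (U : Set (Fin n → X)) (i j : Fin n), IsClosed[τ n] U →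
    @IsIrreducible _ (τ n) U →
    ∀ T : Set (Fin n → X), IsIrredComponentOf (τ n) T (U ∩ {x | x i = x j}) →
      setKrullDim (τ n) U ≤ setKrullDim (τ n) T + 1

open Topology
namespace BB
open Set TopologicalSpace

section general
variable {X Y : Type*} [TopologicalSpace X] [TopologicalSpace Y]

/-- `ge n S`: there is a chain of length `n` of irreducible closed sets below `S`. -/
def ge : ℕ → Set X → Prop
  | 0, _ => True
  | n + 1, S => ∃ T : Set X, IsClosed T ∧ IsIrreducible T ∧ T ⊂ S ∧ ge n T

theorem ge_mono {n : ℕ} {S S' : Set X} (h : S ⊆ S') (hs : ge n S) : ge n S' := by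
  cases n with
  | zero => trivial
  | succ n =>
    obtain ⟨T, h1, h2, h3, h4⟩ := hs
    exact ⟨T, h1, h2, h3.trans_subset h, h4⟩

theorem ge_of_succ {n : ℕ} {S : Set X} (hs : ge (n + 1) S) : ge n S := by
  obtain ⟨T, h1, h2, h3, h4⟩ := hs
  exact ge_mono h3.subset h4

theorem ge_of_le {m n : ℕ} (h : m ≤ n) {S : Set X} (hs : ge n S) : ge m S := by
  induction h with
  | refl => exact hs
  | step _ ih => exact ih (ge_of_succ hs)

theorem irr_of_image {f : X → Y} (hf : IsInducing f) {S : Set X} (h : IsIrreducible (f '' S)) :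
    IsIrreducible S := by
  refine ⟨h.nonempty.of_image, ?_⟩
  intro u v hu hv hSu hSv
  obtain ⟨u', hu', rfl⟩ := hf.isOpen_iff.1 hu
  obtain ⟨v', hv', rfl⟩ := hf.isOpen_iff.1 hv
  obtain ⟨x, hx, hxu⟩ := hSu
  obtain ⟨y, hy, hyv⟩ := hSv
  obtain ⟨z, ⟨w, hw, rfl⟩, hz⟩ := h.isPreirreducible u' v' hu' hv'
    ⟨f x, mem_image_of_mem _ hx, hxu⟩ ⟨f y, mem_image_of_mem _ hy, hyv⟩
  exact ⟨w, hw, hz⟩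

theorem ge_image {f : X → Y} (hf : IsClosedEmbedding f) (n : ℕ) (S : Set X) :
    ge n (f '' S) ↔ ge n S := by
  induction n generalizing S with
  | zero => exact Iff.rfl
  | succ n ih =>
    constructor
    · rintro ⟨T, h1, h2, h3, h4⟩
      have hT : f '' (f ⁻¹' T) = T := by
        rw [image_preimage_eq_inter_range, inter_eq_left]
        exact h3.subset.trans (image_subset_range _ _)
      refine ⟨f ⁻¹' T, h1.preimage hf.continuous, ?_, ?_, ?_⟩
      · apply irr_of_image hf.isInducing
        rwa [hT]
      · refine ⟨fun x hx => ?_, fun h => ?_⟩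
        · obtain ⟨y, hy, hyx⟩ := h3.subset hx
          rwa [← hf.injective hyx]
        · exact h3.2 (by rintro _ ⟨y, hy, rfl⟩; exact h hy)
      · rwa [← ih, hT]
    · rintro ⟨T, h1, h2, h3, h4⟩
      exact ⟨f '' T, hf.isClosedMap _ h1, h2.image f hf.continuous.continuousOn,
        ⟨image_mono h3.subset, fun h => h3.2 ((image_subset_image_iff hf.injective).1 h)⟩, (ih T).2 h4⟩

theorem ge_series (l : LTSeries (IrreducibleCloseds X)) :
    ge l.length (l.last : Set X) := by
  induction l using RelSeries.inductionOn' with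
  | singleton x => trivial
  | snoc p x hx ih =>
    simp only [RelSeries.snoc_length, RelSeries.last_snoc]
    exact ⟨_, p.last.isClosed', p.last.isIrreducible', hx, ih⟩

theorem series_ge (n : ℕ) (S : IrreducibleCloseds X) (h : ge n (S : Set X)) :
    ∃ l : LTSeries (IrreducibleCloseds X), l.length = n ∧ l.last = S := by
  induction n generalizing S with
  | zero => exact ⟨RelSeries.singleton _ S, rfl, rfl⟩
  | succ n ih =>
    obtain ⟨T, h1, h2, h3, h4⟩ := h
    obtain ⟨l, hl, hl'⟩ := ih ⟨T, h2, h1⟩ h4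
    have hlt : l.last < S := by rw [hl']; exact h3
    exact ⟨l.snoc S hlt, by simp [hl], by simp⟩

theorem ge_univ_iff [IrreducibleSpace X] (n : ℕ) :
    ge n (univ : Set X) ↔ (n : WithBot ℕ∞) ≤ topologicalKrullDim X := by
  rw [topologicalKrullDim, Order.le_krullDim_iff]
  constructor
  · intro h
    obtain ⟨l, hl, -⟩ := series_ge n
      (⟨univ, IrreducibleSpace.isIrreducible_univ X, isClosed_univ⟩ : IrreducibleCloseds X) h
    exact ⟨l, hl⟩
  · rintro ⟨l, rfl⟩
    exact ge_mono (subset_univ _) (ge_series l)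

theorem ge_iff_dim {S : Set X} (hc : IsClosed S) (hS : IsIrreducible S) (n : ℕ) :
    ge n S ↔ (n : WithBot ℕ∞) ≤ setKrullDim ‹TopologicalSpace X› S := by
  have := Subtype.irreducibleSpace hS
  have h := ge_univ_iff (X := S) n
  rw [← ge_image hc.isClosedEmbedding_subtypeVal] at h
  simp only [image_univ, Subtype.range_coe_subtype, ofPred_mem_eq] at h
  exact h

theorem irr_union {T A B : Set X} (hT : IsIrreducible T) (hA : IsClosed A) (hB : IsClosed B)
    (h : T ⊆ A ∪ B) : T ⊆ A ∨ T ⊆ B :=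
  isPreirreducible_iff_isClosed_union_isClosed.1 hT.2 A B hA hB h

theorem exists_maxirr {A S : Set X} (hS : IsClosed S) (hA : IsIrreducible A) (h : A ⊆ S) :
    ∃ T, A ⊆ T ∧ IsClosed T ∧ IsIrreducible T ∧
      Maximal (fun T => T ⊆ S ∧ IsIrreducible T) T := by
  obtain ⟨T, hAT, hT⟩ := zorn_subset_nonempty {T : Set X | T ⊆ S ∧ IsIrreducible T} (by
    intro c hc hcc ⟨c0, hc0⟩
    refine ⟨⋃₀ c, ⟨sUnion_subset fun t ht => (hc ht).1, ?_, ?_⟩, fun s hs => subset_sUnion_of_mem hs⟩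
    · obtain ⟨x, hx⟩ := (hc hc0).2.nonempty
      exact ⟨x, c0, hc0, hx⟩
    · rintro u v hu hv ⟨x, ⟨p, hp, hxp⟩, hxu⟩ ⟨y, ⟨q, hq, hyq⟩, hyv⟩
      rcases hcc.total hp hq with hpq | hpq
      · obtain ⟨z, hz, hz'⟩ := (hc hq).2.2 u v hu hv ⟨x, hpq hxp, hxu⟩ ⟨y, hyq, hyv⟩
        exact ⟨z, ⟨q, hq, hz⟩, hz'⟩
      · obtain ⟨z, hz, hz'⟩ := (hc hp).2.2 u v hu hv ⟨x, hxp, hxu⟩ ⟨y, hpq hyq, hyv⟩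
        exact ⟨z, ⟨p, hp, hz⟩, hz'⟩) A ⟨h, hA⟩
  refine ⟨T, hAT, ?_, hT.prop.2, hT⟩
  have := hT.2 (y := closure T) ⟨closure_minimal hT.prop.1 hS, hT.prop.2.closure⟩ subset_closure
  exact isClosed_of_closure_subset this

/-- components dominating an irreducible set. -/
theorem exists_comp [NoetherianSpace X] {f : X → Y} {S : Set X} (hS : IsClosed S)
    {B : Set Y} (hB : IsIrreducible B) (h : B ⊆ closure (f '' S)) :
    ∃ T, IsClosed T ∧ IsIrreducible T ∧ T ⊆ S ∧ B ⊆ closure (f '' T) := by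
  obtain ⟨F, hF, hFc, hFi, rfl⟩ := NoetherianSpace.exists_finite_set_isClosed_irreducible hS
  classical
  have h2 : B ⊆ ⋃₀ ((fun t => closure (f '' t)) '' F) := by
    refine h.trans ?_
    rw [sUnion_image, ← hF.closure_biUnion, sUnion_eq_biUnion, image_iUnion₂]
  obtain ⟨t, ht, hBt⟩ := (isIrreducible_iff_sUnion_isClosed.1 hB) (hF.image (fun t => closure (f '' t))).toFinset
    (by simp) (by simpa using h2)
  simp only [Finite.mem_toFinset, mem_image] at ht
  obtain ⟨T, hT, rfl⟩ := ht
  exact ⟨T, hFc T hT, hFi T hT, subset_sUnion_of_mem hT, hBt⟩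

theorem mem_closure_map {f : X → Y} (hf : Continuous f) {A : Set X} {x : X} (hx : x ∈ closure A)
    {R : Set Y} (hR : IsClosed R) (h : ∀ a ∈ A, f a ∈ R) : f x ∈ R :=
  hR.closure_subset_iff.2 (image_subset_iff.2 h)
    (image_closure_subset_closure_image hf (mem_image_of_mem f hx))

end general
end BB

open Topology
namespace BB
set_option linter.style.haveILetI false
open Set TopologicalSpace

/-- A Zariski geometry on a field refining the Zariski topology, as a class. -/
class HasZ (K : Type*) [Field K] where
  Z : ZariskiGeometry K
  href : ∀ (n : ℕ) (C : Set (Fin n → K)), ZariskiClosedSet K C → IsClosed[Z.τ n] C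

section setup
variable {K : Type*} [Field K] [HasZ K]
variable {σ ρ ρ' : Type} [Finite σ] [Finite ρ] [Finite ρ']

noncomputable instance (priority := 2000) topInst : TopologicalSpace (σ → K) :=
  TopologicalSpace.induced (fun x => x ∘ (Finite.equivFin σ).symm)
    ((HasZ.Z (K := K)).τ (Nat.card σ))

theorem cont_coord (g : ρ → σ ⊕ K) :
    Continuous (fun (x : σ → K) i => Sum.elim x id (g i)) := by
  rw [continuous_induced_rng]
  have h := (HasZ.Z (K := K)).Z0_cont (Nat.card σ) (Nat.card ρ)
    (fun i => (g ((Finite.equivFin ρ).symm i)).map (Finite.equivFin σ) id)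
  have h2 := @Continuous.comp (σ → K) _ _ topInst ((HasZ.Z (K := K)).τ (Nat.card σ))
    ((HasZ.Z (K := K)).τ (Nat.card ρ)) _ _ h (@continuous_induced_dom _ _
      (fun x : σ → K => x ∘ (Finite.equivFin σ).symm) ((HasZ.Z (K := K)).τ (Nat.card σ)))
  convert h2 using 1
  funext x i
  simp only [Function.comp]
  rcases g ((Finite.equivFin ρ).symm i) with j | c <;> simp

theorem cont_comp (e : ρ → σ) : Continuous (fun x : σ → K => x ∘ e) :=
  cont_coord (fun i => Sum.inl (e i))

theorem top_fin (n : ℕ) : (topInst : TopologicalSpace (Fin n → K)) = (HasZ.Z (K := K)).τ n := by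
  unfold topInst
  have key : ∀ (m : ℕ) (_ : m = n) (e : Fin n ≃ Fin m),
      TopologicalSpace.induced (fun x : Fin n → K => x ∘ e.symm) ((HasZ.Z (K := K)).τ m)
      = (HasZ.Z (K := K)).τ n := by
    rintro m rfl e
    apply le_antisymm
    · have h1 := (HasZ.Z (K := K)).Z0_cont m m (fun i => Sum.inl (e i))
      have h2 := @Continuous.comp (Fin m → K) _ _ (TopologicalSpace.induced
        (fun x : Fin m → K => x ∘ e.symm) ((HasZ.Z (K := K)).τ m)) ((HasZ.Z (K := K)).τ m)
        ((HasZ.Z (K := K)).τ m) _ _ h1 (@continuous_induced_dom _ _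
          (fun x : Fin m → K => x ∘ e.symm) ((HasZ.Z (K := K)).τ m))
      rw [← continuous_id_iff_le]
      convert h2 using 1
      funext x i
      simp
    · rw [← continuous_iff_le_induced]
      exact (HasZ.Z (K := K)).Z0_cont m m (fun i => Sum.inl (e.symm i))
  exact key _ (Nat.card_fin n) (Finite.equivFin (Fin n))

instance : NoetherianSpace (σ → K) := by
  have := (HasZ.Z (K := K)).noetherian (Nat.card σ)
  letI := (HasZ.Z (K := K)).τ (Nat.card σ)
  exact IsInducing.noetherianSpace (i := fun x : σ → K => x ∘ (Finite.equivFin σ).symm) ⟨rfl⟩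

theorem closed_eval (p : MvPolynomial σ K) : IsClosed {x : σ → K | MvPolynomial.eval x p = 0} := by
  letI := (HasZ.Z (K := K)).τ (Nat.card σ)
  rw [isClosed_induced_iff]
  refine ⟨{y | MvPolynomial.eval y (MvPolynomial.rename (Finite.equivFin σ) p) = 0},
    HasZ.href _ _ ⟨{MvPolynomial.rename (Finite.equivFin σ) p}, by simp⟩, ?_⟩
  ext x
  simp [MvPolynomial.eval_rename, Function.comp_def]

/-- reindexing homeomorphism -/
noncomputable def reix (e : σ ≃ ρ) : (σ → K) ≃ₜ (ρ → K) where
  toFun x := x ∘ e.symm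
  invFun x := x ∘ e
  left_inv x := by funext i; simp
  right_inv x := by funext i; simp
  continuous_toFun := cont_comp _
  continuous_invFun := cont_comp _

theorem Z1fin (n k : ℕ) (h : k ≤ n) (C : Set (Fin n → K)) (hC : IsClosed C) (hne : C.Nonempty) :
    ∃ F : Set (Fin k → K), IsClosed F ∧
      F ⊂ closure ((fun x => x ∘ Fin.castLE h) '' C) ∧
      closure ((fun x => x ∘ Fin.castLE h) '' C) \ F ⊆ (fun x => x ∘ Fin.castLE h) '' C := by
  have := (HasZ.Z (K := K)).Z1 n k h C
  rw [← top_fin n, ← top_fin k] at this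
  exact this hC hne

theorem Z1' (C : Set (ρ ⊕ ρ' → K)) (hC : IsClosed C) (hne : C.Nonempty) :
    ∃ F : Set (ρ → K), IsClosed F ∧
      F ⊂ closure ((fun x => x ∘ Sum.inl) '' C) ∧
      closure ((fun x => x ∘ Sum.inl) '' C) \ F ⊆ (fun x => x ∘ Sum.inl) '' C := by
  let e1 := Finite.equivFin ρ
  let e2 := Finite.equivFin ρ'
  let e : ρ ⊕ ρ' ≃ Fin (Nat.card ρ + Nat.card ρ') := (Equiv.sumCongr e1 e2).trans finSumFinEquiv
  let H := reix (K := K) e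
  let H1 := reix (K := K) e1
  obtain ⟨F, hF1, hF2, hF3⟩ := Z1fin (Nat.card ρ + Nat.card ρ') (Nat.card ρ) (by omega) (H '' C)
    (H.isClosedMap _ hC) (hne.image _)
  have him : (fun x : Fin (Nat.card ρ + Nat.card ρ') → K => x ∘ Fin.castLE (by omega)) '' (H '' C)
      = H1 '' ((fun x => x ∘ Sum.inl) '' C) := by
    rw [image_image, image_image]
    apply image_congr
    intro x hx
    funext i
    change x (e.symm (Fin.castAdd _ i)) = x (Sum.inl (e1.symm i))
    simp [e]
  rw [him, ← H1.image_closure] at hF2 hF3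
  refine ⟨H1 ⁻¹' F, hF1.preimage H1.continuous, ⟨?_, ?_⟩, ?_⟩
  · rw [← H1.injective.preimage_image (closure _)]
    exact preimage_mono hF2.1
  · intro h
    apply hF2.2
    rwa [image_subset_iff]
  · rintro x ⟨hx, hxF⟩
    obtain ⟨y, hy, hyx⟩ := hF3 ⟨mem_image_of_mem _ hx, hxF⟩
    rwa [← H1.injective hyx]

theorem slice_diag_fin {N : ℕ} (i j : Fin N) {U A : Set (Fin N → K)} (hU : IsClosed U)
    (hUi : IsIrreducible U)
    (hA : IsIrreducible A) (hAU : A ⊆ U) (hAe : ∀ x ∈ A, x i = x j) {n : ℕ} (hn : ge (n + 1) U) :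
    ∃ T, IsClosed T ∧ IsIrreducible T ∧ A ⊆ T ∧ T ⊆ U ∧ (∀ x ∈ T, x i = x j) ∧ ge n T := by
  have hd : IsClosed {x : Fin N → K | x i = x j} := by
    rw [top_fin]; exact (HasZ.Z (K := K)).Z0_diag N i j
  obtain ⟨T, h1, h2, h3, h4⟩ := exists_maxirr (hU.inter hd) hA (fun x hx => ⟨hAU hx, hAe x hx⟩)
  refine ⟨T, h2, h3, h1, fun x hx => (h4.prop.1 hx).1, fun x hx => (h4.prop.1 hx).2, ?_⟩
  have h := (HasZ.Z (K := K)).Z3 N U i j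
  rw [← top_fin] at h
  have h5 := h hU hUi T h4
  rw [ge_iff_dim hU hUi] at hn
  rw [ge_iff_dim h2 h3]
  have h6 := hn.trans h5
  push_cast at h6
  rwa [ENat.WithBot.add_le_add_one_right_iff] at h6

theorem slice_diag (i j : σ) {U A : Set (σ → K)} (hU : IsClosed U)
    (hUi : IsIrreducible U)
    (hA : IsIrreducible A) (hAU : A ⊆ U) (hAe : ∀ x ∈ A, x i = x j) {n : ℕ} (hn : ge (n + 1) U) :
    ∃ T, IsClosed T ∧ IsIrreducible T ∧ A ⊆ T ∧ T ⊆ U ∧ (∀ x ∈ T, x i = x j) ∧ ge n T := by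
  let e := Finite.equivFin σ
  let H := reix (K := K) e
  obtain ⟨T, h1, h2, h3, h4, h5, h6⟩ := slice_diag_fin (e i) (e j) (H.isClosedMap _ hU)
    (hUi.image H H.continuous.continuousOn) (hA.image H H.continuous.continuousOn)
    (image_mono hAU) (by
      rintro _ ⟨x, hx, rfl⟩
      simpa [H, reix] using hAe x hx) ((ge_image H.isClosedEmbedding _ _).2 hn)
  have hT : H '' (H ⁻¹' T) = T := image_preimage_eq _ H.surjective
  refine ⟨H ⁻¹' T, h1.preimage H.continuous, ?_, ?_, ?_, ?_, ?_⟩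
  · apply irr_of_image H.isInducing; rwa [hT]
  · exact image_subset_iff.1 h3
  · rw [← H.injective.preimage_image U]; exact preimage_mono h4
  · intro x hx
    simpa [H, reix] using h5 _ hx
  · rwa [← ge_image H.isClosedEmbedding, hT]

instance irrK : IrreducibleSpace (Unit → K) := by
  have h := (HasZ.Z (K := K)).Z2_irred
  rw [← top_fin] at h
  exact (reix (K := K) (Equiv.ofUnique (Fin 1) Unit)).surjective.irreducibleSpace
    (reix (K := K) (Equiv.ofUnique (Fin 1) Unit)).continuous

end setup
end BB

open Topology
namespace BB
open Set TopologicalSpace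

section poly
variable {K : Type*} [Field K]
variable {σ ρ ρ' : Type}

/-- polynomial functions -/
@[fun_prop]
def IsPoly (h : (σ → K) → K) : Prop := ∃ p : MvPolynomial σ K, ∀ x, h x = MvPolynomial.eval x p

namespace IsPoly
@[fun_prop]
theorem const (c : K) : IsPoly (fun _ : σ → K => c) := ⟨MvPolynomial.C c, by simp⟩
@[fun_prop]
theorem coord (i : σ) : IsPoly (fun x : σ → K => x i) := ⟨MvPolynomial.X i, by simp⟩
@[fun_prop]
theorem add {f g : (σ → K) → K} (hf : IsPoly f) (hg : IsPoly g) : IsPoly (fun x => f x + g x) := by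
  obtain ⟨p, hp⟩ := hf
  obtain ⟨q, hq⟩ := hg
  exact ⟨p + q, by simp [hp, hq]⟩
@[fun_prop]
theorem mul {f g : (σ → K) → K} (hf : IsPoly f) (hg : IsPoly g) : IsPoly (fun x => f x * g x) := by
  obtain ⟨p, hp⟩ := hf
  obtain ⟨q, hq⟩ := hg
  exact ⟨p * q, by simp [hp, hq]⟩
@[fun_prop]
theorem sub {f g : (σ → K) → K} (hf : IsPoly f) (hg : IsPoly g) : IsPoly (fun x => f x - g x) := by
  obtain ⟨p, hp⟩ := hf
  obtain ⟨q, hq⟩ := hg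
  exact ⟨p - q, by simp [hp, hq]⟩
@[fun_prop]
theorem pow {f : (σ → K) → K} (hf : IsPoly f) (n : ℕ) : IsPoly (fun x => f x ^ n) := by
  obtain ⟨p, hp⟩ := hf
  exact ⟨p ^ n, by simp [hp]⟩
@[fun_prop]
theorem sum {ι : Type*} (s : Finset ι) {f : ι → (σ → K) → K} (hf : ∀ i, IsPoly (f i)) :
    IsPoly (fun x => ∑ i ∈ s, f i x) := by
  choose p hp using hf
  exact ⟨∑ i ∈ s, p i, by simp [hp]⟩
@[fun_prop]
theorem prod {ι : Type*} (s : Finset ι) {f : ι → (σ → K) → K} (hf : ∀ i, IsPoly (f i)) :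
    IsPoly (fun x => ∏ i ∈ s, f i x) := by
  choose p hp using hf
  exact ⟨∏ i ∈ s, p i, by simp [hp]⟩

theorem comp {f : (ρ → K) → K} (hf : IsPoly f) {g : (σ → K) → ρ → K}
    (hg : ∀ i, IsPoly (fun x => g x i)) : IsPoly (fun x => f (g x)) := by
  obtain ⟨p, hp⟩ := hf
  choose q hq using hg
  refine ⟨MvPolynomial.bind₁ q p, fun x => ?_⟩
  change f (g x) = _
  have : g x = fun i => MvPolynomial.eval x (q i) := by funext i; exact hq i x
  rw [hp, this]
  simp only [MvPolynomial.eval, MvPolynomial.eval₂Hom_bind₁]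

theorem eval (p : MvPolynomial ρ K) {g : (σ → K) → ρ → K}
    (hg : ∀ i, IsPoly (fun x => g x i)) : IsPoly (fun x => MvPolynomial.eval (g x) p) :=
  comp ⟨p, fun _ => rfl⟩ hg
end IsPoly

variable [HasZ K] [Finite σ] [Finite ρ] [Finite ρ']

theorem closed_zero {f : (σ → K) → K} (hf : IsPoly f) : IsClosed {x | f x = 0} := by
  obtain ⟨p, hp⟩ := hf
  simp only [hp]
  exact closed_eval p

theorem closed_eq {f g : (σ → K) → K} (hf : IsPoly f) (hg : IsPoly g) : IsClosed {x | f x = g x} := by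
  have := closed_zero (hf.sub hg)
  simpa only [sub_eq_zero] using this

theorem closed_singleton (a : σ → K) : IsClosed ({a} : Set (σ → K)) := by
  have : ({a} : Set (σ → K)) = ⋂ i, {x | x i = a i} := by
    ext x; simp [funext_iff]
  rw [this]
  exact isClosed_iInter fun i => closed_eq (by fun_prop) (by fun_prop)

theorem closedEmb {f : (σ → K) → (ρ → K)} (hf : Continuous f) {g : (ρ → K) → (σ → K)}
    (hg : Continuous g) (h : ∀ x, g (f x) = x) (hr : IsClosed (range f)) : IsClosedEmbedding f :=
  ⟨IsEmbedding.of_leftInverse h hg hf, hr⟩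

theorem closed_finite {S : Set (σ → K)} (hS : S.Finite) : IsClosed S := by
  rw [← biUnion_of_singleton S]
  exact hS.isClosed_biUnion fun x _ => closed_singleton x

theorem ge_one_iff {T : Set (σ → K)} : ge 1 T ↔ ∃ x ∈ T, ∃ y ∈ T, x ≠ y := by
  constructor
  · rintro ⟨S, h1, h2, h3, -⟩
    obtain ⟨x, hx⟩ := h2.nonempty
    obtain ⟨y, hy, hyS⟩ := exists_of_ssubset h3
    exact ⟨x, h3.subset hx, y, hy, fun h => hyS (h ▸ hx)⟩
  · rintro ⟨x, hx, y, hy, hxy⟩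
    refine ⟨{x}, closed_singleton x, isIrreducible_singleton, ⟨by simpa using hx, fun h => ?_⟩, trivial⟩
    exact hxy (h hy).symm

theorem irr_finite {T : Set (σ → K)} (hT : IsIrreducible T) (hf : T.Finite) : ¬ ge 1 T := by
  rw [ge_one_iff]
  rintro ⟨x, hx, y, hy, hxy⟩
  rcases irr_union hT (closed_singleton x) (closed_finite (hf.subset (sdiff_subset (t := {x}))))
    (by intro z hz; by_cases h : z = x <;> simp [h, hz]) with h | h
  · exact hxy (h hy).symm
  · exact (h hx).2 rfl

/-- product -/
def pr (A : Set (σ → K)) (B : Set (ρ → K)) : Set (σ ⊕ ρ → K) :=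
  {z | z ∘ Sum.inl ∈ A ∧ z ∘ Sum.inr ∈ B}

theorem cont_elim_left (y : ρ → K) : Continuous (fun x : σ → K => Sum.elim x y) := by
  convert cont_coord (K := K) (σ := σ) (ρ := σ ⊕ ρ)
    (Sum.elim (fun i => Sum.inl i) (fun j => Sum.inr (y j))) using 1
  funext x i
  rcases i with i | i <;> rfl

theorem cont_elim_right (x : σ → K) : Continuous (fun y : ρ → K => Sum.elim x y) := by
  convert cont_coord (K := K) (σ := ρ) (ρ := σ ⊕ ρ)
    (Sum.elim (fun j => Sum.inr (x j)) (fun i => Sum.inl i)) using 1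
  funext x i
  rcases i with i | i <;> rfl

theorem pr_closed {A : Set (σ → K)} {B : Set (ρ → K)} (hA : IsClosed A) (hB : IsClosed B) :
    IsClosed (pr A B) :=
  (hA.preimage (cont_comp Sum.inl)).inter (hB.preimage (cont_comp Sum.inr))

theorem pr_irr {A : Set (σ → K)} {B : Set (ρ → K)} (hA : IsIrreducible A) (hB : IsIrreducible B) :
    IsIrreducible (pr A B) := by
  obtain ⟨x0, hx0⟩ := hA.nonempty
  obtain ⟨y0, hy0⟩ := hB.nonempty
  refine ⟨⟨Sum.elim x0 y0, by simpa using hx0, by simpa using hy0⟩, ?_⟩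
  rw [isPreirreducible_iff_isClosed_union_isClosed]
  intro F G hF hG hFG
  have hcl : ∀ F : Set (σ ⊕ ρ → K), IsClosed F → IsClosed {x | ∀ y ∈ B, Sum.elim x y ∈ F} := by
    intro F hF
    have : {x | ∀ y ∈ B, Sum.elim x y ∈ F} = ⋂ y ∈ B, {x | Sum.elim x y ∈ F} := by
      ext x; simp
    rw [this]
    exact isClosed_biInter fun y _ => hF.preimage (cont_elim_left y)
  rcases irr_union hA (hcl F hF) (hcl G hG) (by
    intro x hx
    exact irr_union hB (hF.preimage (cont_elim_right x)) (hG.preimage (cont_elim_right x))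
      (fun y hy => hFG ⟨by simpa using hx, by simpa using hy⟩)) with h | h
  · left
    rintro z ⟨hz1, hz2⟩
    have := h hz1 _ hz2
    rwa [Sum.elim_comp_inl_inr] at this
  · right
    rintro z ⟨hz1, hz2⟩
    have := h hz1 _ hz2
    rwa [Sum.elim_comp_inl_inr] at this

/-- product of a family -/
def piSet {ι τ : Type} (A : ι → Set (τ → K)) : Set (ι × τ → K) :=
  {x | ∀ i, (fun t => x (i, t)) ∈ A i}

theorem piSet_main {ι τ : Type} [Finite ι] [Finite τ] [DecidableEq ι] (A : ι → Set (τ → K))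
    (hAc : ∀ i, IsClosed (A i)) (hAi : ∀ i, IsIrreducible (A i)) (q q' : ι → τ → K)
    (hq : ∀ i, q i ∈ A i) (hq' : ∀ i, q' i ∈ A i) (hne : ∀ i, q i ≠ q' i) (S : Finset ι) :
    IsClosed (piSet (fun i => if i ∈ S then A i else {q i})) ∧
    IsIrreducible (piSet (fun i => if i ∈ S then A i else {q i})) ∧
    ge S.card (piSet (fun i => if i ∈ S then A i else {q i})) := by
  have hcl : ∀ S : Finset ι, IsClosed (piSet (fun i => if i ∈ S then A i else {q i})) := by
    intro S
    have : piSet (fun i => if i ∈ S then A i else {q i}) =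
      ⋂ i, (fun x : ι × τ → K => x ∘ (fun t => (i, t))) ⁻¹' (if i ∈ S then A i else {q i}) := by
      ext x; simp [piSet, Function.comp_def]
    rw [this]
    refine isClosed_iInter fun i => IsClosed.preimage (cont_comp _) ?_
    split_ifs
    exacts [hAc i, closed_singleton _]
  induction S using Finset.induction_on with
  | empty =>
    refine ⟨hcl _, ?_, trivial⟩
    convert isIrreducible_singleton (x := fun it : ι × τ => q it.1 it.2)
    ext x
    simp only [piSet, Finset.notMem_empty, if_false, mem_ofPred_eq, mem_singleton_iff, funext_iff,
      Prod.forall]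
  | insert i S hi ih =>
    obtain ⟨h1, h2, h3⟩ := ih
    refine ⟨hcl _, ?_, ?_⟩
    · let e : ι × τ → (ι × τ) ⊕ τ := fun jt => if jt.1 = i then Sum.inr jt.2 else Sum.inl jt
      have h4 := (pr_irr h2 (hAi i)).image _ (cont_comp (K := K) e).continuousOn
      convert h4
      ext x
      constructor
      · intro hx
        refine ⟨Sum.elim (fun jt => if jt.1 = i then q i jt.2 else x jt) (fun t => x (i, t)), ⟨?_, ?_⟩, ?_⟩
        · intro j
          by_cases hj : j = i
          · subst hj; simp [hi]
          · have := hx j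
            simpa [hj] using this
        · have := hx i
          simpa [Function.comp_def] using this
        · funext ⟨j, t⟩
          by_cases hj : j = i
          · subst hj; simp [e]
          · simp [e, hj]
      · rintro ⟨z, ⟨hz1, hz2⟩, rfl⟩
        intro j
        by_cases hj : j = i
        · subst hj; simpa [e, Function.comp_def] using hz2
        · have := hz1 j
          simpa [e, hj] using this
    · rw [Finset.card_insert_of_notMem hi]
      refine ⟨_, h1, h2, ⟨?_, ?_⟩, h3⟩
      · intro x hx j
        have := hx j
        by_cases hj : j = i
        · subst hj
          simp only [hi, if_false, mem_singleton_iff] at this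
          simp [this, hq]
        · simpa [hj] using this
      · intro h
        have h5 : (fun it : ι × τ => if it.1 = i then q' i it.2 else q it.1 it.2) ∈
          piSet (fun j => if j ∈ insert i S then A j else {q j}) := by
          intro j
          by_cases hj : j = i
          · subst hj; simp [hq']
          · by_cases hjS : j ∈ S <;> simp [hj, hjS, hq]
        have := h h5 i
        simp only [hi, if_true, if_false, mem_singleton_iff] at this
        exact hne i this.symm

theorem piSet_all {ι τ : Type} [Finite ι] [Finite τ] (A : ι → Set (τ → K))
    (hAc : ∀ i, IsClosed (A i)) (hAi : ∀ i, IsIrreducible (A i)) 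
    (hne : ∀ i, ∃ q ∈ A i, ∃ q' ∈ A i, q ≠ q') :
    IsClosed (piSet A) ∧ IsIrreducible (piSet A) ∧ ge (Nat.card ι) (piSet A) := by
  classical
  have := Fintype.ofFinite ι
  choose q hq q' hq' hne using hne
  have := piSet_main A hAc hAi q q' hq hq' hne Finset.univ
  simpa [Nat.card_eq_fintype_card] using this

theorem univ_irr_ge : IsIrreducible (univ : Set (σ → K)) ∧ ge (Nat.card σ) (univ : Set (σ → K)) := by
  obtain ⟨-, h2, h3⟩ := piSet_all (K := K) (ι := σ) (τ := Unit) (fun _ => univ) (fun _ => isClosed_univ)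
    (fun _ => IrreducibleSpace.isIrreducible_univ _)
    (fun _ => ⟨fun _ => 0, trivial, fun _ => 1, trivial, by simp [funext_iff]⟩)
  let H := reix (K := K) (Equiv.prodPUnit.{0, 0} σ)
  have hH : H '' (piSet (fun _ => univ)) = univ := by
    have : (piSet (fun _ => univ) : Set (σ × Unit → K)) = univ := by ext x; simp [piSet]
    rw [this, image_univ, H.surjective.range_eq]
  rw [← hH]
  exact ⟨h2.image _ H.continuous.continuousOn, (ge_image H.isClosedEmbedding _ _).2 h3⟩

theorem univ_irr : IsIrreducible (univ : Set (σ → K)) := univ_irr_ge.1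

theorem univ_ge : ge (Nat.card σ) (univ : Set (σ → K)) := univ_irr_ge.2

/-- sliceable predicates -/
def Sl (P : (σ → K) → Prop) : Prop := ∀ U A : Set (σ → K), IsClosed U → IsIrreducible U →
  IsIrreducible A → A ⊆ U → (∀ x ∈ A, P x) → ∀ n, ge (n + 1) U →
  ∃ T, IsClosed T ∧ IsIrreducible T ∧ A ⊆ T ∧ T ⊆ U ∧ (∀ x ∈ T, P x) ∧ ge n T

theorem Sl_diag (i j : σ) : Sl (fun x : σ → K => x i = x j) :=
  fun _ _ h1 h2 h3 h4 h5 _ h6 => slice_diag i j h1 h2 h3 h4 h5 h6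

/-- slicing transfers along closed embeddings. -/
theorem Sl_emb {f : (σ → K) → (ρ → K)} (hf : IsClosedEmbedding f) {P : (ρ → K) → Prop} (hP : Sl P) :
    Sl (fun x => P (f x)) := by
  intro U A hU hUi hA hAU hAP n hn
  obtain ⟨T, h1, h2, h3, h4, h5, h6⟩ := hP (f '' U) (f '' A) (hf.isClosedMap _ hU)
    (hUi.image _ hf.continuous.continuousOn) (hA.image _ hf.continuous.continuousOn) (image_mono hAU)
    (by rintro _ ⟨x, hx, rfl⟩; exact hAP x hx) n ((ge_image hf _ _).2 hn)
  have hT : f '' (f ⁻¹' T) = T := by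
    rw [image_preimage_eq_inter_range, inter_eq_left]
    exact h4.trans (image_subset_range _ _)
  refine ⟨f ⁻¹' T, h1.preimage hf.continuous, ?_, ?_, ?_, ?_, ?_⟩
  · apply irr_of_image hf.isInducing; rwa [hT]
  · exact image_subset_iff.1 h3
  · rw [← hf.injective.preimage_image U]; exact preimage_mono h4
  · intro x hx
    exact h5 _ hx
  · rwa [← ge_image hf, hT]

theorem Sl_const (i : σ) (c : K) : Sl (fun x : σ → K => x i = c) := by
  have hf : IsClosedEmbedding (fun x : σ → K => (Sum.elim x (fun _ : Unit => c))) := by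
    refine closedEmb (cont_elim_left _) (cont_comp Sum.inl) (fun x => rfl) ?_
    have : range (fun x : σ → K => (Sum.elim x (fun _ : Unit => c))) = {z | z (Sum.inr ()) = c} := by
      ext z
      constructor
      · rintro ⟨x, rfl⟩; rfl
      · intro hz
        refine ⟨z ∘ Sum.inl, ?_⟩
        funext i
        rcases i with i | i
        · rfl
        · exact hz.symm
    rw [this]
    exact closed_eq (by fun_prop) (by fun_prop)
  exact Sl_emb hf (Sl_diag (Sum.inl i) (Sum.inr ()))

theorem Sl_multi {ι : Type*} (s : Finset ι) (P : ι → (σ → K) → Prop) (hP : ∀ i, Sl (P i))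
    {U A : Set (σ → K)} (hU : IsClosed U) (hUi : IsIrreducible U) (hA : IsIrreducible A)
    (hAU : A ⊆ U) (hAP : ∀ i ∈ s, ∀ x ∈ A, P i x) {n : ℕ} (hn : ge (n + s.card) U) :
    ∃ T, IsClosed T ∧ IsIrreducible T ∧ A ⊆ T ∧ T ⊆ U ∧ (∀ i ∈ s, ∀ x ∈ T, P i x) ∧ ge n T := by
  classical
  induction s using Finset.induction_on generalizing n with
  | empty => exact ⟨U, hU, hUi, hAU, subset_rfl, by simp, by simpa using hn⟩
  | insert i s hi ih =>
    rw [Finset.card_insert_of_notMem hi] at hn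
    obtain ⟨T, h1, h2, h3, h4, h5, h6⟩ := ih (fun j hj => hAP j (Finset.mem_insert_of_mem hj)) (n := n + 1)
      (by rwa [show n + 1 + s.card = n + (s.card + 1) by ring])
    obtain ⟨T', h1', h2', h3', h4', h5', h6'⟩ := hP i T A h1 h2 hA h3 (hAP i (by simp)) n h6
    refine ⟨T', h1', h2', h3', h4'.trans h4, ?_, h6'⟩
    intro j hj x hx
    rcases Finset.mem_insert.1 hj with rfl | hj
    · exact h5' x hx
    · exact h5 j hj x (h4' hx)

theorem not_ge_card (S : Set (σ → K)) : ¬ ge (Nat.card σ + 1) S := by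
  intro h
  have := Fintype.ofFinite σ
  obtain ⟨T, h1, h2, h3, h4, h5, h6⟩ := Sl_multi (K := K) Finset.univ (fun (i : σ) x => x i = 0)
    (fun i => Sl_const i 0) isClosed_univ univ_irr (isIrreducible_singleton (x := 0)) (subset_univ _)
    (by simp) (n := 1) (by
      rw [add_comm, Finset.card_univ, ← Nat.card_eq_fintype_card]; exact ge_mono (subset_univ _) h)
  refine irr_finite h2 ((finite_singleton 0).subset fun x hx => ?_) h6
  funext i
  exact h5 i (Finset.mem_univ i) x hx

theorem exists_dim (S : Set (σ → K)) : ∃ n, ge n S ∧ ¬ ge (n + 1) S := by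
  by_contra! h
  have : ∀ n, ge n S := by
    intro n
    induction n with
    | zero => trivial
    | succ n ih => exact h n ih
  exact not_ge_card S (this _)

end poly
end BB

open Topology
namespace BB
open Set TopologicalSpace

section dims
variable {K : Type*} [Field K] [HasZ K]
variable {σ ρ ρ' : Type} [Finite σ] [Finite ρ] [Finite ρ']

theorem dom (n : ℕ) (T : Set (ρ ⊕ ρ' → K)) (hT : IsClosed T) (hTi : IsIrreducible T)
    (h : ge n (closure ((fun x => x ∘ Sum.inl) '' T))) : ge n T := by
  induction n generalizing T with
  | zero => trivial
  | succ n ih =>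
    have hπ : Continuous (fun x : ρ ⊕ ρ' → K => x ∘ Sum.inl) := cont_comp _
    have hBi : IsIrreducible (closure ((fun x => x ∘ Sum.inl) '' T)) :=
      (hTi.image _ hπ.continuousOn).closure
    obtain ⟨F, hFc, hF, hFT⟩ := Z1' T hT hTi.nonempty
    set B := closure ((fun x => x ∘ Sum.inl) '' T) with hB
    obtain ⟨b, hbB, hbF⟩ := exists_of_ssubset hF
    obtain ⟨x, hx, y, hy, hxy⟩ := ge_one_iff.1 (ge_of_le (Nat.le_add_left 1 n) h)
    have hex : ∃ w ∈ B, w ≠ b := by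
      by_cases hxb : x = b
      · exact ⟨y, hy, fun hyb => hxy (hxb.trans hyb.symm)⟩
      · exact ⟨x, hx, hxb⟩
    obtain ⟨w, hw, hwb⟩ := hex
    obtain ⟨i, hi⟩ := Function.ne_iff.1 hwb
    obtain ⟨B', h1, h2, h3, h4, h5, h6⟩ := Sl_const i (b i) B {b} isClosed_closure hBi
      isIrreducible_singleton (by simpa using hbB) (by simp) n h
    have hbB' : b ∈ B' := h3 rfl
    have hS : B' ⊆ closure ((fun x => x ∘ Sum.inl) '' (T ∩ (fun x => x ∘ Sum.inl) ⁻¹' B')) := by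
      rcases irr_union h2 hFc (isClosed_closure
        (s := (fun x => x ∘ Sum.inl) '' (T ∩ (fun x => x ∘ Sum.inl) ⁻¹' B'))) (by
          intro z hz
          by_cases hzF : z ∈ F
          · exact Or.inl hzF
          · right
            obtain ⟨t, ht, htz⟩ := hFT ⟨h4 hz, hzF⟩
            exact subset_closure ⟨t, ⟨ht, by simpa [htz] using hz⟩, htz⟩) with h | h
      · exact absurd (h hbB') hbF
      · exact h
    obtain ⟨T', g1, g2, g3, g4⟩ := exists_comp (hT.inter (h1.preimage hπ)) h2 hS
    refine ⟨T', g1, g2, ⟨fun t ht => (g3 ht).1, fun hc => ?_⟩, ih T' g1 g2 (ge_mono g4 h6)⟩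
    have : B ⊆ B' := by
      refine closure_minimal ?_ h1
      rintro _ ⟨t, ht, rfl⟩
      exact (g3 (hc ht)).2
    exact hi (h5 w (this hw))

theorem inj (n : ℕ) (e : ρ → σ) (T : Set (σ → K)) (hT : IsClosed T) (hTi : IsIrreducible T)
    (hinj : ∀ x ∈ T, ∀ y ∈ T, x ∘ e = y ∘ e → x = y) (h : ge n T) :
    ge n (closure ((fun x => x ∘ e) '' T)) := by
  induction n generalizing T with
  | zero => trivial
  | succ n ih =>
    obtain ⟨x, hx, y, hy, hxy⟩ := ge_one_iff.1 (ge_of_le (Nat.le_add_left 1 n) h)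
    have hne : x ∘ e ≠ y ∘ e := fun h => hxy (hinj x hx y hy h)
    obtain ⟨i, hi⟩ := Function.ne_iff.1 hne
    obtain ⟨T', h1, h2, h3, h4, h5, h6⟩ := Sl_const (e i) (x (e i)) T {x} hT hTi
      isIrreducible_singleton (by simpa using hx) (by simp) n h
    refine ⟨closure ((fun x => x ∘ e) '' T'), isClosed_closure,
      (h2.image _ (cont_comp e).continuousOn).closure, ⟨closure_mono (image_mono h4), fun hc => ?_⟩,
      ih T' h1 h2 (fun x hx y hy => hinj x (h4 hx) y (h4 hy)) h6⟩
    have hcl : closure ((fun x => x ∘ e) '' T') ⊆ {z : ρ → K | z i = x (e i)} := by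
      refine closure_minimal ?_ (closed_eq (by fun_prop) (by fun_prop))
      rintro _ ⟨t, ht, rfl⟩
      exact h5 t ht
    exact hi (hcl (hc (subset_closure ⟨y, hy, rfl⟩))).symm

theorem ge_pr {A : Set (σ → K)} {B : Set (ρ → K)} (hAc : IsClosed A) (hA : IsIrreducible A)
    (hB : IsIrreducible B) (hBc : IsClosed B) {a b : ℕ}
    (ha : ge a A) (hb : ge b B) : ge (a + b) (pr A B) := by
  induction b generalizing B with
  | zero =>
    obtain ⟨y, hy⟩ := hB.nonempty
    have hf : IsClosedEmbedding (fun x : σ → K => Sum.elim x y) := by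
      refine closedEmb (cont_elim_left _) (cont_comp Sum.inl) (fun x => rfl) ?_
      have : range (fun x : σ → K => Sum.elim x y) = ⋂ j, {z | z (Sum.inr j) = y j} := by
        ext z
        simp only [mem_range, mem_iInter]
        constructor
        · rintro ⟨x, rfl⟩ j; rfl
        · intro hz
          refine ⟨z ∘ Sum.inl, ?_⟩
          funext i
          rcases i with i | i
          · rfl
          · exact (hz i).symm
      rw [this]
      exact isClosed_iInter fun j => closed_eq (by fun_prop) (by fun_prop)
    refine ge_mono ?_ ((ge_image hf _ _).2 ha)
    rintro _ ⟨x, hx, rfl⟩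
    exact ⟨hx, hy⟩
  | succ b ih =>
    obtain ⟨B', h1, h2, h3, h4⟩ := hb
    refine ⟨pr A B', pr_closed hAc h1, pr_irr hA h2, ⟨fun z hz => ⟨hz.1, h3.subset hz.2⟩, ?_⟩, ih h2 h1 h4⟩
    intro h
    obtain ⟨x, hx⟩ := hA.nonempty
    exact h3.2 fun y hy => (h (show Sum.elim x y ∈ pr A B from ⟨hx, hy⟩)).2

theorem H0 {M : ℕ} (hM : Nat.card σ = M + 1) {φ : (σ → K) → K} (hφ : IsPoly φ) (a : σ → K) :
    ∃ T : Set (σ → K), IsClosed T ∧ IsIrreducible T ∧ a ∈ T ∧ (∀ x ∈ T, φ x = φ a) ∧ ge M T := by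
  let Γ : Set (σ ⊕ Unit → K) := {z | z (Sum.inr ()) = φ (z ∘ Sum.inl)}
  have hΓ : IsClosed Γ := closed_eq (by fun_prop) (hφ.comp fun i => by simp only [Function.comp]; fun_prop)
  obtain ⟨Γ₁, g1, g2, g3, g4⟩ := exists_comp (f := fun z : σ ⊕ Unit → K => z ∘ Sum.inl) hΓ
    (univ_irr (K := K) (σ := σ)) (by
      intro x _
      exact subset_closure ⟨Sum.elim x (fun _ => φ x), by simp [Γ], by simp⟩)
  have hge : ge (M + 1) Γ₁ := dom _ _ g1 g2 (ge_mono g4 (hM ▸ univ_ge))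
  have hge2 := ge_pr g1 g2 g2 g1 hge hge
  obtain ⟨S, s1, s2, s3, s4, s5, s6⟩ := Sl_diag (Sum.inl (Sum.inr ())) (Sum.inr (Sum.inr ()))
    (pr Γ₁ Γ₁) ((fun z => z ∘ Sum.elim id id) '' Γ₁) (pr_closed g1 g1) (pr_irr g2 g2)
    (g2.image _ (cont_comp _).continuousOn) (by
      rintro _ ⟨z, hz, rfl⟩
      exact ⟨hz, hz⟩) (by
      rintro _ ⟨z, hz, rfl⟩
      rfl) (2 * M + 1) (by convert hge2 using 1; ring)
  let e : σ ⊕ σ → (σ ⊕ Unit) ⊕ (σ ⊕ Unit) := Sum.map Sum.inl Sum.inl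
  have hS : ∀ z ∈ S, z (Sum.inl (Sum.inr ())) = φ (fun i => z (Sum.inl (Sum.inl i))) ∧
      z (Sum.inr (Sum.inr ())) = φ (fun i => z (Sum.inr (Sum.inl i))) :=
    fun z hz => ⟨g3 (s4 hz).1, g3 (s4 hz).2⟩
  have hR := inj (2 * M + 1) e S s1 s2 (by
    intro x hx y hy hxy
    have h1 : ∀ i, x (Sum.inl (Sum.inl i)) = y (Sum.inl (Sum.inl i)) := fun i => congrFun hxy (Sum.inl i)
    have h2 : ∀ i, x (Sum.inr (Sum.inl i)) = y (Sum.inr (Sum.inl i)) := fun i => congrFun hxy (Sum.inr i)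
    funext i
    rcases i with (i | i) | (i | i)
    · exact h1 i
    · rw [(hS x hx).1, (hS y hy).1]; simp only [h1]
    · exact h2 i
    · rw [(hS x hx).2, (hS y hy).2]; simp only [h2]) s6
  have hRi := (s2.image _ (cont_comp (K := K) e).continuousOn).closure
  set R := closure ((fun x => x ∘ e) '' S) with hRdef
  have hRφ : ∀ z ∈ R, φ (fun i => z (Sum.inl i)) = φ (fun i => z (Sum.inr i)) := by
    have hcl : IsClosed {z : σ ⊕ σ → K | φ (fun i => z (Sum.inl i)) = φ (fun i => z (Sum.inr i))} :=
      closed_eq (hφ.comp fun i => by fun_prop) (hφ.comp fun i => by fun_prop)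
    refine closure_minimal ?_ hcl
    rintro _ ⟨t, ht, rfl⟩
    change φ (fun i => t (Sum.inl (Sum.inl i))) = φ (fun i => t (Sum.inr (Sum.inl i)))
    rw [← (hS t ht).1, ← (hS t ht).2]
    exact s5 t ht
  have haR : Sum.elim a a ∈ R := by
    have := mem_closure_map (cont_comp (K := K) (Sum.elim id id : σ ⊕ σ → σ)) (g4 (mem_univ a))
      (R := R) isClosed_closure (by
        rintro _ ⟨z, hz, rfl⟩
        refine subset_closure ⟨_, s3 ⟨z, hz, rfl⟩, ?_⟩
        funext i
        rcases i with i | i <;> rfl)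
    convert this using 1
    funext i
    rcases i with i | i <;> rfl
  have := Fintype.ofFinite σ
  obtain ⟨T, t1, t2, t3, t4, t5, t6⟩ := Sl_multi Finset.univ (fun (i : σ) (z : σ ⊕ σ → K) => z (Sum.inr i) = a i)
    (fun i => Sl_const _ _) isClosed_closure hRi (isIrreducible_singleton (x := Sum.elim a a))
    (by simpa using haR) (by simp) (n := M) (by
      rw [Finset.card_univ, ← Nat.card_eq_fintype_card, hM]
      convert hR using 1; ring)
  have t5' : ∀ x ∈ T, ∀ i, x (Sum.inr i) = a i := fun x hx i => t5 i (Finset.mem_univ i) x hx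
  have hT := inj M (Sum.inl : σ → σ ⊕ σ) T t1 t2 (by
    intro x hx y hy hxy
    funext i
    rcases i with i | i
    · exact congrFun hxy i
    · rw [t5' x hx, t5' y hy]) t6
  refine ⟨_, isClosed_closure, (t2.image _ (cont_comp _).continuousOn).closure,
    subset_closure ⟨_, t3 rfl, rfl⟩, ?_, hT⟩
  have hcl : IsClosed {z : σ → K | φ z = φ a} := closed_eq hφ (by fun_prop)
  refine closure_minimal ?_ hcl
  rintro _ ⟨t, ht, rfl⟩
  have := hRφ t (t4 ht)
  simp only [t5' t ht] at this
  exact this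

theorem append {Γ : Set (σ ⊕ Unit → K)} (hΓ : IsClosed Γ)
    (hinj : ∀ z ∈ Γ, ∀ z' ∈ Γ, z ∘ Sum.inl = z' ∘ Sum.inl → z = z')
    (hpure : ∀ z ∈ Γ, ∃ T, IsClosed T ∧ IsIrreducible T ∧ z ∈ T ∧ T ⊆ Γ ∧ ge (Nat.card σ) T)
    {S : Set (σ ⊕ Unit → K)} (hS : IsClosed S) {z : σ ⊕ Unit → K} (hz : z ∈ Γ)
    (hzS : z ∘ Sum.inl ∈ closure ((fun z => z ∘ Sum.inl) '' (Γ ∩ S))) : z ∈ S := by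
  obtain ⟨S₁, g1, g2, g3, g4⟩ := exists_comp (hΓ.inter hS)
    (isIrreducible_singleton (x := z ∘ Sum.inl)) (by simpa using hzS)
  have hBi := (g2.image _ (cont_comp (K := K) (Sum.inl : σ → σ ⊕ Unit)).continuousOn).closure
  obtain ⟨F, hFc, hF, hFT⟩ := Z1' S₁ g1 g2.nonempty
  set B := closure ((fun z => z ∘ Sum.inl) '' S₁) with hB
  have hzB : z ∘ Sum.inl ∈ B := g4 rfl
  obtain ⟨n, hn, hn'⟩ := exists_dim B
  obtain ⟨T, t1, t2, t3, t4, t5⟩ := hpure z hz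
  have := Fintype.ofFinite σ
  obtain ⟨E, e1, e2, e3, e4, e5, e6⟩ := Sl_multi Finset.univ
    (fun (j : σ) (w : σ ⊕ (σ ⊕ Unit) → K) => w (Sum.inl j) = w (Sum.inr (Sum.inl j)))
    (fun j => Sl_diag _ _) (pr_closed isClosed_closure t1) (pr_irr hBi t2)
    (isIrreducible_singleton (x := Sum.elim (z ∘ Sum.inl) z))
    (by simpa using (show Sum.elim (z ∘ Sum.inl) z ∈ pr B T from ⟨hzB, t3⟩)) (by simp) (n := n)
    (by rw [Finset.card_univ, ← Nat.card_eq_fintype_card]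
        exact ge_pr isClosed_closure hBi t2 t1 hn t5)
  have e5' : ∀ w ∈ E, w ∘ Sum.inr ∘ Sum.inl = w ∘ Sum.inl :=
    fun w hw => funext fun j => (e5 j (Finset.mem_univ j) w hw).symm
  have hE := inj n Sum.inl E e1 e2 (by
    intro x hx y hy hxy
    have h1 : x ∘ Sum.inr = y ∘ Sum.inr := by
      apply hinj _ (t4 (e4 hx).2) _ (t4 (e4 hy).2)
      have h2 := e5' x hx
      have h3 := e5' y hy
      rw [hxy, ← h3] at h2
      exact h2
    rw [← Sum.elim_comp_inl_inr x, ← Sum.elim_comp_inl_inr y, hxy, h1]) e6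
  have hEi := (e2.image _ (cont_comp (K := K) (Sum.inl : σ → σ ⊕ (σ ⊕ Unit))).continuousOn).closure
  have hEB : B ⊆ closure ((fun x => x ∘ Sum.inl) '' E) := by
    by_contra hc
    apply hn'
    refine ⟨_, isClosed_closure, hEi, ⟨closure_minimal ?_ isClosed_closure, hc⟩, hE⟩
    rintro _ ⟨w, hw, rfl⟩
    exact (e4 hw).1
  rcases irr_union e2 (hS.preimage (cont_comp (Sum.inr : σ ⊕ Unit → σ ⊕ (σ ⊕ Unit))))
    (hFc.preimage (cont_comp (Sum.inl : σ → σ ⊕ (σ ⊕ Unit)))) (by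
      intro w hw
      by_cases hwF : w ∘ Sum.inl ∈ F
      · exact Or.inr hwF
      · left
        obtain ⟨z', hz', hzw⟩ := hFT ⟨(e4 hw).1, hwF⟩
        have : w ∘ Sum.inr = z' := by
          apply hinj _ (t4 (e4 hw).2) _ (g3 hz').1
          exact (e5' w hw).trans hzw.symm
        change w ∘ Sum.inr ∈ S
        rw [this]; exact (g3 hz').2) with h | h
  · exact h (e3 rfl)
  · exfalso
    apply hF.2
    refine hEB.trans (closure_minimal ?_ hFc)
    rintro _ ⟨w, hw, rfl⟩
    exact h hw

theorem append_cont {h : (σ → K) → K} (hh : IsPoly h) :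
    Continuous (fun x : σ → K => (Sum.elim x (fun _ => h x) : σ ⊕ Unit → K)) := by
  let φ : (σ ⊕ Unit → K) → K := fun z => z (Sum.inr ()) - h (fun i => z (Sum.inl i))
  have hφ : IsPoly φ := IsPoly.sub (by fun_prop) (hh.comp fun i => by fun_prop)
  have hΓ : ∀ z : σ ⊕ Unit → K, φ z = 0 ↔ z (Sum.inr ()) = h (fun i => z (Sum.inl i)) :=
    fun z => sub_eq_zero
  have hc : Nat.card (σ ⊕ Unit) = Nat.card σ + 1 := by
    rw [Nat.card_sum]; simp
  rw [continuous_iff_isClosed]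
  intro S hS
  refine isClosed_of_closure_subset fun x hx => ?_
  refine append (Γ := {z | φ z = 0}) (closed_zero hφ) ?_ ?_ hS
    (z := Sum.elim x (fun _ => h x)) ?_ ?_
  · intro z hz z' hz' hzz
    rw [mem_ofPred_eq, hΓ] at hz hz'
    have h1 : ∀ i, z (Sum.inl i) = z' (Sum.inl i) := fun i => congrFun hzz i
    funext i
    rcases i with i | i
    · exact h1 i
    · rw [hz, hz']; simp only [h1]
  · intro z hz
    obtain ⟨T, t1, t2, t3, t4, t5⟩ := H0 hc hφ z
    exact ⟨T, t1, t2, t3, fun y hy => (t4 y hy).trans hz, t5⟩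
  · rw [mem_ofPred_eq, hΓ]; rfl
  · refine closure_mono ?_ hx
    intro y hy
    exact ⟨Sum.elim y (fun _ => h y), ⟨by rw [mem_ofPred_eq, hΓ]; rfl, hy⟩, rfl⟩

theorem inv_closure {A : Set (σ → K)} {x : σ → K} (hx : x ∈ closure A) (i : σ) (hi : x i ≠ 0)
    {S : Set (σ ⊕ Unit → K)} (hS : IsClosed S)
    (h : ∀ a ∈ A, a i ≠ 0 → (Sum.elim a (fun _ => (a i)⁻¹) : σ ⊕ Unit → K) ∈ S) :
    (Sum.elim x (fun _ => (x i)⁻¹) : σ ⊕ Unit → K) ∈ S := by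
  let φ : (σ ⊕ Unit → K) → K := fun z => z (Sum.inl i) * z (Sum.inr ()) 
  have hφ : IsPoly φ := by fun_prop
  have hc : Nat.card (σ ⊕ Unit) = Nat.card σ + 1 := by
    rw [Nat.card_sum]; simp
  refine append (Γ := {z | φ z = 1}) (closed_eq hφ (by fun_prop)) ?_ ?_ hS ?_ ?_
  · intro z hz z' hz' hzz
    have h1 : ∀ i, z (Sum.inl i) = z' (Sum.inl i) := fun i => congrFun hzz i
    funext j
    rcases j with j | j
    · exact h1 j
    · have h2 : z (Sum.inl i) * z (Sum.inr ()) = 1 := hz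
      have h3 : z' (Sum.inl i) * z' (Sum.inr ()) = 1 := hz'
      rw [← h1] at h3
      exact mul_left_cancel₀ (left_ne_zero_of_mul_eq_one h2) (h2.trans h3.symm)
  · intro z hz
    obtain ⟨T, t1, t2, t3, t4, t5⟩ := H0 hc hφ z
    exact ⟨T, t1, t2, t3, fun y hy => (t4 y hy).trans hz, t5⟩
  · exact mul_inv_cancel₀ hi
  · have h1 : closure A ⊆ {x | x i = 0} ∪ closure (A ∩ {x | x i ≠ 0}) := by
      refine closure_minimal ?_ ((closed_eq (by fun_prop) (by fun_prop)).union isClosed_closure)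
      intro a ha
      by_cases hai : a i = 0
      · exact Or.inl hai
      · exact Or.inr (subset_closure ⟨ha, hai⟩)
    rcases h1 hx with h2 | h2
    · exact absurd h2 hi
    · refine closure_mono ?_ h2
      rintro a ⟨ha, hai⟩
      exact ⟨Sum.elim a (fun _ => (a i)⁻¹), ⟨mul_inv_cancel₀ hai, h a ha hai⟩, rfl⟩

theorem appends_cont (ρ : Type) [Finite ρ] : ∀ (Φ : (σ → K) → (ρ → K)), (∀ i, IsPoly (fun x => Φ x i)) →
    Continuous (fun x : σ → K => (Sum.elim x (Φ x) : σ ⊕ ρ → K)) := by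
  let P : Type → Prop := fun ρ => ∀ [Finite ρ], ∀ (Φ : (σ → K) → (ρ → K)), (∀ i, IsPoly (fun x => Φ x i)) →
    Continuous (fun x : σ → K => (Sum.elim x (Φ x) : σ ⊕ ρ → K))
  have : P ρ := by
    refine Finite.induction_empty_option (P := P) ?_ ?_ ?_ ρ
    · intro α β e ih _ Φ hΦ
      have : Finite α := Finite.of_equiv β e.symm
      have h1 := (cont_comp (K := K) (Sum.map id e.symm : σ ⊕ β → σ ⊕ α)).comp
        (ih (fun x => Φ x ∘ e) (fun i => hΦ (e i)))
      convert h1 using 1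
      funext x i
      rcases i with i | i <;> simp
    · intro _ Φ hΦ
      have h1 := cont_comp (K := K) (Sum.elim id PEmpty.elim : σ ⊕ PEmpty → σ)
      convert h1 using 1
      funext x i
      rcases i with i | i
      · rfl
      · exact i.elim
    · intro α _ ih _ Φ hΦ
      have h1 := ih (fun x => Φ x ∘ some) (fun i => hΦ (some i))
      have h2 := append_cont (σ := σ ⊕ α) (h := fun z => Φ (fun i => z (Sum.inl i)) none)
        ((hΦ none).comp (fun i => by fun_prop))
      have h3 := cont_comp (K := K) (Sum.elim (fun i => Sum.inl (Sum.inl i))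
        (fun o => o.elim (Sum.inr ()) (fun a => Sum.inl (Sum.inr a))) : σ ⊕ Option α → (σ ⊕ α) ⊕ Unit)
      convert h3.comp (h2.comp h1) using 1
      funext x i
      rcases i with i | (_ | i) <;> rfl
  exact this

theorem poly_cont {Φ : (σ → K) → (ρ → K)} (hΦ : ∀ i, IsPoly (fun x => Φ x i)) : Continuous Φ :=
  (cont_comp Sum.inr).comp (appends_cont ρ Φ hΦ)

theorem Sl_poly {φ : (σ → K) → K} (hφ : IsPoly φ) : Sl (fun x => φ x = 0) := by
  have hf : IsClosedEmbedding (fun x : σ → K => (Sum.elim x (fun _ => φ x) : σ ⊕ Unit → K)) := by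
    refine closedEmb (append_cont hφ) (cont_comp Sum.inl) (fun x => rfl) ?_
    have : range (fun x : σ → K => (Sum.elim x (fun _ => φ x) : σ ⊕ Unit → K)) =
        {z | z (Sum.inr ()) = φ (fun i => z (Sum.inl i))} := by
      ext z
      constructor
      · rintro ⟨x, rfl⟩; rfl
      · intro hz
        refine ⟨z ∘ Sum.inl, ?_⟩
        funext i
        rcases i with i | i
        · rfl
        · exact hz.symm
    rw [this]
    exact closed_eq (by fun_prop) (hφ.comp fun i => by fun_prop)
  exact Sl_emb hf (Sl_const (Sum.inr ()) 0)

theorem dom_poly {Φ : (σ → K) → (ρ → K)} (hΦ : ∀ i, IsPoly (fun x => Φ x i)) {n : ℕ} {T : Set (σ → K)}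
    (hT : IsClosed T) (hTi : IsIrreducible T) (h : ge n (closure (Φ '' T))) : ge n T := by
  have hG : ∀ i, IsPoly (fun x : σ → K => (Sum.elim (Φ x) x : ρ ⊕ σ → K) i) := by
    rintro (i | i)
    · exact hΦ i
    · exact IsPoly.coord i
  have hf : IsClosedEmbedding (fun x : σ → K => (Sum.elim (Φ x) x : ρ ⊕ σ → K)) := by
    refine closedEmb (poly_cont hG) (cont_comp Sum.inr) (fun x => rfl) ?_
    have : range (fun x : σ → K => (Sum.elim (Φ x) x : ρ ⊕ σ → K)) =
        ⋂ j, {z | z (Sum.inl j) = Φ (fun i => z (Sum.inr i)) j} := by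
      ext z
      simp only [mem_range, mem_iInter]
      constructor
      · rintro ⟨x, rfl⟩ j; rfl
      · intro hz
        refine ⟨z ∘ Sum.inr, ?_⟩
        funext i
        rcases i with i | i
        · exact (hz i).symm
        · rfl
    rw [this]
    exact isClosed_iInter fun j => closed_eq (by fun_prop) ((hΦ j).comp fun i => by fun_prop)
  rw [← ge_image hf]
  refine dom _ _ (hf.isClosedMap _ hT) (hTi.image _ hf.continuous.continuousOn) ?_
  rw [image_image]
  exact h

end dims
end BB

open Topology
namespace BB
open Set TopologicalSpace

section limits
variable {K : Type*} [Field K] [HasZ K]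
variable {σ ρ ρ' : Type} [Finite σ] [Finite ρ] [Finite ρ']

theorem line_dense {A : Set (Unit → K)} (hA : IsIrreducible A) {x y : Unit → K} (hx : x ∈ A)
    (hy : y ∈ A) (hxy : x ≠ y) : closure A = univ := by
  by_contra hc
  have h1 : ge 1 (closure A) := ge_one_iff.2 ⟨x, subset_closure hx, y, subset_closure hy, hxy⟩
  have h2 : ge 2 (univ : Set (Unit → K)) :=
    ⟨closure A, isClosed_closure, hA.closure, ssubset_univ_iff.2 hc, h1⟩
  have h3 := not_ge_card (univ : Set (Unit → K))
  simp only [Nat.card_unique] at h3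
  exact h3 h2

theorem limit_lemma {ι : Type} [Fintype ι] [DecidableEq ι] {J : Set (σ → K)} (hJ : IsIrreducible J)
    {s : (σ → K) → K} (hs : IsPoly s) {φ : ι → (σ → K) → Fin 3 → K}
    (hφ : ∀ α k, IsPoly (fun x => φ α x k))
    {j0 j1 j2 : σ → K} (hj0 : j0 ∈ J) (hφ0 : ∀ α, φ α j0 ≠ 0) (hj1 : j1 ∈ J) (hj2 : j2 ∈ J)
    (hs12 : s j1 ≠ s j2) (s0 : K) :
    ∃ V : ι → Fin 3 → K, (∀ α, V α ≠ 0) ∧ ∀ R : Set (Option (ι × Fin 3) → K), IsClosed R →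
      (∀ j ∈ J, ∀ l : ι → K, (fun o => o.elim (s j) (fun ak => l ak.1 * φ ak.1 j ak.2)) ∈ R) →
      (fun o => o.elim s0 (fun ak => V ak.1 ak.2)) ∈ R := by
  let G : (σ ⊕ Unit → K) → (Option (ι → Fin 3) → K) := fun z o => o.elim (s (fun i => z (Sum.inl i)))
    (fun c => z (Sum.inr ()) * ∏ α, φ α (fun i => z (Sum.inl i)) (c α))
  have hG : ∀ o, IsPoly (fun z => G z o) := by
    rintro (_ | c)
    · exact hs.comp fun i => by fun_prop
    · exact IsPoly.mul (by fun_prop) (IsPoly.prod _ fun α => (hφ α (c α)).comp fun i => by fun_prop)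
  have hGc := poly_cont hG
  set D := closure (G '' pr J univ) with hD
  have hDi : IsIrreducible D := ((pr_irr hJ univ_irr).image _ hGc.continuousOn).closure
  have hmem : ∀ j ∈ J, ∀ t : K, G (Sum.elim j (fun _ => t)) ∈ D := fun j hj t =>
    subset_closure ⟨Sum.elim j (fun _ => t), ⟨hj, trivial⟩, rfl⟩
  let L : Set (Option (ι → Fin 3) → K) := {x | ∀ c, x (some c) = 0}
  let f : (Unit → K) → (Option (ι → Fin 3) → K) := fun u o => o.elim (u ()) (fun _ => 0)
  have hf : Continuous f := poly_cont (by
    rintro (_ | c)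
    · exact IsPoly.coord ()
    · exact IsPoly.const 0)
  have hLf : L = f '' univ := by
    ext x
    constructor
    · intro hx
      refine ⟨fun _ => x none, trivial, ?_⟩
      funext o
      rcases o with _ | c
      · rfl
      · exact (hx c).symm
    · rintro ⟨u, -, rfl⟩ c
      rfl
  have hLc : IsClosed L := by
    have : L = ⋂ c, {x | x (some c) = 0} := by ext x; simp [L]
    rw [this]
    exact isClosed_iInter fun c => closed_zero (by fun_prop)
  have hLD : L ⊆ D := by
    rw [hLf]
    rintro _ ⟨u, -, rfl⟩
    have hsc : Continuous (fun j : σ → K => (fun _ : Unit => s j)) := poly_cont fun _ => hs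
    have hu : u ∈ closure ((fun j : σ → K => (fun _ : Unit => s j)) '' J) := by
      rw [line_dense (hJ.image _ hsc.continuousOn) (mem_image_of_mem _ hj1) (mem_image_of_mem _ hj2)
        (fun h => hs12 (congrFun h ()))]
      trivial
    refine mem_closure_map hf hu isClosed_closure ?_
    rintro _ ⟨j, hj, rfl⟩
    have := hmem j hj 0
    convert this using 1
    funext o
    rcases o with _ | c
    · rfl
    · simp [f, G]
  have hL1 : ge 1 L := by
    rw [hLf]
    refine ge_one_iff.2 ⟨f (fun _ => 0), ⟨fun _ => 0, trivial, rfl⟩, f (fun _ => 1), ⟨fun _ => 1, trivial, rfl⟩, ?_⟩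
    intro h
    have := congrFun h none
    simp [f] at this
  have hD2 : ge 2 D := by
    refine ⟨L, hLc, ?_, ⟨hLD, fun h => ?_⟩, hL1⟩
    · rw [hLf]; exact univ_irr.image _ hf.continuousOn
    · have hc : ∀ α, ∃ k, φ α j0 k ≠ 0 := fun α => Function.ne_iff.1 (hφ0 α)
      choose c hc using hc
      have h1 := h (hmem j0 hj0 1) c
      simp only [G, Option.elim, Sum.elim_inr, Sum.elim_inl, one_mul] at h1
      exact (Finset.prod_ne_zero_iff.2 fun α _ => hc α) h1
  obtain ⟨T, t1, t2, t3, t4, t5, t6⟩ := Sl_const none s0 D {f (fun _ => s0)} isClosed_closure hDi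
    isIrreducible_singleton (by
      rw [singleton_subset_iff]; apply hLD; rw [hLf]; exact ⟨fun _ => s0, trivial, rfl⟩)
    (by rintro _ rfl; rfl) 1 hD2
  have hw : ∃ w ∈ T, w ≠ f (fun _ => s0) := by
    obtain ⟨x, hx, y, hy, hxy⟩ := ge_one_iff.1 t6
    by_cases h : x = f (fun _ => s0)
    · exact ⟨y, hy, fun hyy => hxy (h.trans hyy.symm)⟩
    · exact ⟨x, hx, h⟩
  obtain ⟨w, hwT, hw⟩ := hw
  obtain ⟨o, ho⟩ := Function.ne_iff.1 hw
  obtain ⟨c, hc⟩ : ∃ c, w (some c) ≠ 0 := by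
    rcases o with _ | c
    · exact absurd (t5 w hwT) ho
    · exact ⟨c, ho⟩
  refine ⟨fun α k => w (some (Function.update c α k)), fun α h => ?_, fun R hR hJR => ?_⟩
  · have := congrFun h (c α)
    simp only [Function.update_eq_self, Pi.zero_apply] at this
    exact hc this
  · let e : Option (ι × Fin 3) → Option (ι → Fin 3) :=
      fun o => o.map (fun ak => Function.update c ak.1 ak.2)
    have := mem_closure_map (cont_comp (K := K) e) (t4 hwT) hR (by
      rintro _ ⟨z, ⟨hz, -⟩, rfl⟩
      have := hJR _ hz (fun α => z (Sum.inr ()) * ∏ β ∈ {α}ᶜ, φ β (z ∘ Sum.inl) (c β))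
      convert this using 1
      funext o
      rcases o with _ | ⟨α, k⟩
      · rfl
      · simp only [Function.comp, e, Option.map, G, Option.elim]
        rw [Fintype.prod_eq_mul_prod_compl α, Function.update_self]
        rw [Finset.prod_congr rfl (g := fun β => φ β (fun i => z (Sum.inl i)) (c β)) (by
          intro β hβ
          rw [Function.update_of_ne (by simpa using hβ)])]
        change _ = (z (Sum.inr ()) * ∏ β ∈ {α}ᶜ, φ β (fun i => z (Sum.inl i)) (c β)) *
          φ α (fun i => z (Sum.inl i)) k
        ring)
    convert this using 1
    funext o
    rcases o with _ | ⟨α, k⟩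
    · exact (t5 w hwT).symm
    · rfl

theorem curve_inter_finite {B P : Set (σ → K)} (hB : IsClosed B) (hB2 : ¬ ge 2 B)
    (hP : IsClosed P) (hBP : ¬ B ⊆ P) : (B ∩ P).Finite := by
  obtain ⟨F, hF, hFc, hFi, hFe⟩ := NoetherianSpace.exists_finite_set_isClosed_irreducible (hB.inter hP)
  rw [hFe]
  refine hF.sUnion fun t ht => Set.Subsingleton.finite ?_
  intro x hx y hy
  by_contra hxy
  have htB : t ⊆ B ∩ P := hFe ▸ subset_sUnion_of_mem ht
  exact hB2 ⟨t, hFc t ht, hFi t ht, ⟨fun z hz => (htB hz).1, fun h => hBP fun z hz => (htB (h hz)).2⟩,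
    ge_one_iff.2 ⟨x, hx, y, hy, hxy⟩⟩

theorem pr_dim {A : Set (σ → K)} {B : Set (ρ → K)} (hA : IsClosed A) (hAi : IsIrreducible A)
    (hB : IsClosed B) (hBi : IsIrreducible B) (hB1 : ge 1 B) (hB2 : ¬ ge 2 B) {n : ℕ} (hn : ¬ ge n A) :
    ¬ ge (n + 1) (pr A B) := by
  intro h
  obtain ⟨b, hb, b', hb', hbb⟩ := ge_one_iff.1 hB1
  obtain ⟨i, hi⟩ := Function.ne_iff.1 hbb
  obtain ⟨a, ha⟩ := hAi.nonempty
  obtain ⟨T, t1, t2, t3, t4, t5, t6⟩ := Sl_const (Sum.inr i) (b i) (pr A B) {Sum.elim a b}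
    (pr_closed hA hB) (pr_irr hAi hBi) isIrreducible_singleton
    (by rw [singleton_subset_iff]; exact ⟨ha, hb⟩) (by rintro _ rfl; rfl) n h
  have hfin : (B ∩ {y | y i = b i}).Finite := curve_inter_finite hB hB2
    (closed_eq (by fun_prop) (by fun_prop)) (fun h => hi (h hb').symm)
  have hi1 := t2.image _ (cont_comp (K := K) (Sum.inr : ρ → σ ⊕ ρ)).continuousOn
  have hi2 := irr_finite hi1 (hfin.subset (by
    rintro _ ⟨w, hw, rfl⟩
    exact ⟨(t4 hw).2, t5 w hw⟩))
  apply hn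
  refine ge_mono ?_ (inj n (Sum.inl : σ → σ ⊕ ρ) T t1 t2 ?_ t6)
  · refine closure_minimal ?_ hA
    rintro _ ⟨w, hw, rfl⟩
    exact (t4 hw).1
  · intro x hx y hy hxy
    have : x ∘ Sum.inr = y ∘ Sum.inr := by
      by_contra hc
      exact hi2 (ge_one_iff.2 ⟨_, mem_image_of_mem _ hx, _, mem_image_of_mem _ hy, hc⟩)
    rw [← Sum.elim_comp_inl_inr x, ← Sum.elim_comp_inl_inr y, hxy, this]

theorem unit_ge : ge 1 (univ : Set (Unit → K)) := by
  simpa using univ_ge (K := K) (σ := Unit)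

theorem unit_not_ge : ¬ ge 2 (univ : Set (Unit → K)) := by
  simpa using not_ge_card (K := K) (σ := Unit) univ

/-- affine cone -/
def cone (C : Set (Fin 2 → K)) : Set (Fin 3 → K) :=
  closure {v | ∃ p ∈ C, ∃ t : K, v = ![t * p 0, t * p 1, t]}

theorem cone_facts {C : Set (Fin 2 → K)} (hC : IsClosed C) (hCi : IsIrreducible C) (hC2 : ¬ ge 2 C) :
    IsIrreducible (cone C) ∧ ¬ ge 3 (cone C) := by
  let Φ : (Fin 2 ⊕ Unit → K) → (Fin 3 → K) := fun z =>
    ![z (Sum.inr ()) * z (Sum.inl 0), z (Sum.inr ()) * z (Sum.inl 1), z (Sum.inr ())]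
  have hΦ : ∀ i, IsPoly (fun z => Φ z i) := by
    intro i
    fin_cases i <;> simp [Φ] <;> fun_prop
  have he : {v | ∃ p ∈ C, ∃ t : K, v = ![t * p 0, t * p 1, t]} = Φ '' pr C univ := by
    ext v
    constructor
    · rintro ⟨p, hp, t, rfl⟩
      exact ⟨Sum.elim p (fun _ => t), ⟨hp, trivial⟩, rfl⟩
    · rintro ⟨z, ⟨hz, -⟩, rfl⟩
      exact ⟨_, hz, z (Sum.inr ()), rfl⟩
  have hi : IsIrreducible (pr C (univ : Set (Unit → K))) := pr_irr hCi univ_irr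
  rw [cone, he]
  refine ⟨(hi.image _ (poly_cont hΦ).continuousOn).closure, fun h => ?_⟩
  exact pr_dim hC hCi isClosed_univ univ_irr unit_ge unit_not_ge hC2
    (dom_poly hΦ (pr_closed hC isClosed_univ) hi h)

theorem bad1 {C : Set (Fin 2 → K)} (hC : IsClosed C) (hCi : IsIrreducible C) (hC2 : ¬ ge 2 C) :
    IsClosed {q : Fin 2 → K | ![1, q 0, 0] ∈ cone C} ∧ {q : Fin 2 → K | ![1, q 0, 0] ∈ cone C} ≠ univ := by
  obtain ⟨hi, h3⟩ := cone_facts hC hCi hC2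
  refine ⟨IsClosed.preimage (poly_cont (Φ := fun q : Fin 2 → K => ![1, q 0, 0]) (by
    intro i; fin_cases i <;> simp <;> fun_prop)) isClosed_closure, fun h => ?_⟩
  have hscale : ∀ v ∈ cone C, ∀ t : K, ![t * v 0, t * v 1, t * v 2] ∈ cone C := by
    intro v hv t
    refine mem_closure_map (poly_cont (Φ := fun v : Fin 3 → K => ![t * v 0, t * v 1, t * v 2]) (by
      intro i; fin_cases i <;> simp <;> fun_prop)) hv isClosed_closure ?_
    rintro _ ⟨p, hp, u, rfl⟩
    refine subset_closure ⟨p, hp, t * u, ?_⟩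
    simp [mul_assoc]
  let P : Set (Fin 3 → K) := {v | v 2 = 0}
  have hPc : IsClosed P := closed_zero (by fun_prop)
  have hPe : P = (fun q : Fin 2 → K => ![q 0, q 1, 0]) '' univ := by
    ext v
    constructor
    · intro hv
      refine ⟨![v 0, v 1], trivial, ?_⟩
      funext i
      fin_cases i
      · rfl
      · rfl
      · exact Eq.symm hv
    · rintro ⟨q, -, rfl⟩
      rfl
  have hPi : IsIrreducible P := by
    rw [hPe]
    exact univ_irr.image _ (poly_cont (by intro i; fin_cases i <;> simp <;> fun_prop)).continuousOn
  have hPC : P ⊆ cone C := by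
    rcases irr_union hPi (A := {v : Fin 3 → K | v 0 = 0}) (B := cone C) (closed_zero (by fun_prop))
      isClosed_closure (by
        intro v hv
        by_cases h0 : v 0 = 0
        · exact Or.inl h0
        · right
          have h1 : (![v 1 / v 0, 0] : Fin 2 → K) ∈ {q : Fin 2 → K | ![1, q 0, 0] ∈ cone C} := h ▸ trivial
          have h2 := hscale _ h1 (v 0)
          convert h2 using 1
          have hv2 : v 2 = 0 := hv
          funext i
          fin_cases i <;> simp [hv2]
          field_simp) with h1 | h1
    · have h2 : (![1, 0, 0] : Fin 3 → K) ∈ P := by simp [P]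
      have := h1 h2
      simp at this
    · exact h1
  obtain ⟨p, hp⟩ := hCi.nonempty
  refine h3 ⟨P, hPc, hPi, ⟨hPC, fun hc => ?_⟩, ?_⟩
  · have h1 : (![1 * p 0, 1 * p 1, 1] : Fin 3 → K) ∈ P := hc (subset_closure ⟨p, hp, 1, rfl⟩)
    simp [P] at h1
  · refine dom_poly (Φ := fun v : Fin 3 → K => ![v 0, v 1]) (by
      intro i; fin_cases i <;> simp <;> fun_prop) hPc hPi ?_
    have : (fun v : Fin 3 → K => ![v 0, v 1]) '' P = univ := by
      rw [eq_univ_iff_forall]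
      intro q
      refine ⟨![q 0, q 1, 0], by simp [P], ?_⟩
      funext i
      fin_cases i <;> rfl
    rw [this, closure_univ]
    simpa using univ_ge (K := K) (σ := Fin 2)

/-- secant variety -/
def sec (C : Set (Fin 2 → K)) : Set (Fin 6 → K) :=
  closure {w | ∃ p ∈ C, ∃ p' ∈ C, ∃ t : K,
    w = ![p 0, p 1, p' 0, p' 1, t * (p' 0 - p 0), t * (p' 1 - p 1)]}

theorem sec_facts {C : Set (Fin 2 → K)} (hC : IsClosed C) (hCi : IsIrreducible C) (hC1 : ge 1 C)
    (hC2 : ¬ ge 2 C) : IsIrreducible (sec C) ∧ ¬ ge 4 (sec C) := by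
  let Φ : ((Fin 2 ⊕ Fin 2) ⊕ Unit → K) → (Fin 6 → K) := fun z =>
    ![z (Sum.inl (Sum.inl 0)), z (Sum.inl (Sum.inl 1)), z (Sum.inl (Sum.inr 0)), z (Sum.inl (Sum.inr 1)),
      z (Sum.inr ()) * (z (Sum.inl (Sum.inr 0)) - z (Sum.inl (Sum.inl 0))),
      z (Sum.inr ()) * (z (Sum.inl (Sum.inr 1)) - z (Sum.inl (Sum.inl 1)))]
  have hΦ : ∀ i, IsPoly (fun z => Φ z i) := by
    intro i
    fin_cases i <;> simp [Φ] <;> fun_prop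
  have he : {w | ∃ p ∈ C, ∃ p' ∈ C, ∃ t : K,
    w = ![p 0, p 1, p' 0, p' 1, t * (p' 0 - p 0), t * (p' 1 - p 1)]} = Φ '' pr (pr C C) univ := by
    ext v
    constructor
    · rintro ⟨p, hp, p', hp', t, rfl⟩
      exact ⟨Sum.elim (Sum.elim p p') (fun _ => t), ⟨⟨hp, hp'⟩, trivial⟩, rfl⟩
    · rintro ⟨z, ⟨⟨hz, hz'⟩, -⟩, rfl⟩
      exact ⟨_, hz, _, hz', z (Sum.inr ()), rfl⟩
  have hi : IsIrreducible (pr (pr C C) (univ : Set (Unit → K))) := pr_irr (pr_irr hCi hCi) univ_irr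
  rw [sec, he]
  refine ⟨(hi.image _ (poly_cont hΦ).continuousOn).closure, fun h => ?_⟩
  exact pr_dim (pr_closed hC hC) (pr_irr hCi hCi) isClosed_univ univ_irr unit_ge unit_not_ge
    (pr_dim hC hCi hC hCi hC1 hC2 hC2)
    (dom_poly hΦ (pr_closed (pr_closed hC hC) isClosed_univ) hi h)

theorem sec_scale {C : Set (Fin 2 → K)} {w : Fin 6 → K} (hw : w ∈ sec C) (t : K) :
    ![w 0, w 1, w 2, w 3, t * w 4, t * w 5] ∈ sec C := by
  refine mem_closure_map (poly_cont (Φ := fun w : Fin 6 → K => ![w 0, w 1, w 2, w 3, t * w 4, t * w 5]) (by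
      intro i; fin_cases i <;> simp <;> fun_prop)) hw isClosed_closure ?_
  rintro _ ⟨p, hp, p', hp', u, rfl⟩
  refine subset_closure ⟨p, hp, p', hp', t * u, ?_⟩
  simp [mul_assoc]

/-- tangent lines -/
def tang (C : Set (Fin 2 → K)) : Set (Fin 2 → K) :=
  closure {q | ∃ x y, ![x, y, x, y, 1, q 0] ∈ sec C ∧ q 1 = y - q 0 * x}

theorem bad2 {C : Set (Fin 2 → K)} (hC : IsClosed C) (hCi : IsIrreducible C) (hC1 : ge 1 C)
    (hC2 : ¬ ge 2 C) : tang C ≠ univ := by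
  intro h
  obtain ⟨hi, h4⟩ := sec_facts hC hCi hC1 hC2
  let T : Set (Fin 6 → K) := sec C ∩ ({w | w 0 = w 2} ∩ {w | w 1 = w 3})
  have hT : IsClosed T := isClosed_closure.inter ((closed_eq (by fun_prop) (by fun_prop)).inter
    (closed_eq (by fun_prop) (by fun_prop)))
  let Ψ : (Fin 6 → K) → (Fin 3 → K) := fun w => ![w 4, w 5, w 4 * w 1 - w 5 * w 0]
  have hΨ : ∀ i, IsPoly (fun z => Ψ z i) := by
    intro i
    fin_cases i <;> simp [Ψ] <;> fun_prop
  have hdense : (univ : Set (Fin 3 → K)) ⊆ closure (Ψ '' T) := by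
    rcases irr_union (univ_irr (K := K) (σ := Fin 3)) (A := {v : Fin 3 → K | v 0 = 0}) (B := closure (Ψ '' T))
      (closed_zero (by fun_prop)) isClosed_closure (by
        intro v _
        by_cases h0 : v 0 = 0
        · exact Or.inl h0
        · right
          have h1 : (![v 1 / v 0, v 2 / v 0] : Fin 2 → K) ∈ tang C := h ▸ trivial
          have h2 := mem_closure_map (poly_cont
            (Φ := fun q : Fin 2 → K => ![v 0, v 0 * q 0, v 0 * q 1]) (by
            intro i; fin_cases i <;> simp <;> fun_prop)) h1 (R := closure (Ψ '' T)) isClosed_closure (by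
              rintro q ⟨x, y, hq, hq1⟩
              refine subset_closure ⟨_, ⟨sec_scale hq (v 0), rfl, rfl⟩, ?_⟩
              funext i
              fin_cases i <;> simp [Ψ, hq1]
              ring)
          convert h2 using 1
          funext i
          fin_cases i <;> simp <;> field_simp) with h1 | h1
    · have := h1 (mem_univ (fun _ => 1))
      simp at this
    · exact h1
  obtain ⟨T', t1, t2, t3, t4⟩ := exists_comp hT univ_irr hdense
  refine h4 ⟨T', t1, t2, ⟨fun w hw => (t3 hw).1, fun hc => ?_⟩, dom_poly hΨ t1 t2 (ge_mono t4
    (by simpa using univ_ge (K := K) (σ := Fin 3)))⟩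
  obtain ⟨p, hp, p', hp', hpp⟩ := ge_one_iff.1 hC1
  have h1 := (t3 (hc (subset_closure ⟨p, hp, p', hp', 0, rfl⟩))).2
  apply hpp
  funext i
  fin_cases i
  · exact h1.1
  · exact h1.2

end limits
end BB

open Topology
namespace BB
open Set TopologicalSpace

section final
set_option linter.unusedSectionVars false
variable {K : Type*} [Field K] [HasZ K]
variable {σ ρ ρ' : Type} [Finite σ] [Finite ρ] [Finite ρ']

theorem avoid {W : Set (Fin 2 → K)} (hW : IsOpen W) (hWn : W.Nonempty) {F : Set (Fin 2 → K)}
    (hF : F.Finite) : ∃ q ∈ W, ∀ p ∈ F, p 1 ≠ q 0 * p 0 + q 1 := by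
  induction F, hF using Set.Finite.induction_on generalizing W with
  | empty =>
    obtain ⟨q, hq⟩ := hWn
    exact ⟨q, hq, by simp⟩
  | @insert p F hp hF ih =>
    have hO : IsOpen {q : Fin 2 → K | p 1 = q 0 * p 0 + q 1}ᶜ :=
      (closed_eq (by fun_prop) (by fun_prop)).isOpen_compl
    have hne : ({q : Fin 2 → K | p 1 = q 0 * p 0 + q 1}ᶜ).Nonempty :=
      ⟨![0, p 1 + 1], by simp⟩
    have h := (univ_irr (K := K) (σ := Fin 2)).2 W _ hW hO (by simpa using hWn) (by simpa using hne)
    rw [univ_inter] at h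
    obtain ⟨q, hq, hq'⟩ := ih (hW.inter hO) h
    refine ⟨q, hq.1, ?_⟩
    rintro p' (rfl | hp')
    · exact hq.2
    · exact hq' p' hp'

theorem lines {C W : Set (Fin 2 → K)} (hW : IsOpen W) (hWn : W.Nonempty)
    (hfin : ∀ q ∈ W, (C ∩ {p : Fin 2 → K | p 1 = q 0 * p 0 + q 1}).Finite) (d : ℕ) :
    ∃ q : Fin d → Fin 2 → K, (∀ k, q k ∈ W) ∧ ∀ p ∈ C, ∀ k k', p 1 = q k 0 * p 0 + q k 1 →
      p 1 = q k' 0 * p 0 + q k' 1 → k = k' := by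
  induction d with
  | zero => exact ⟨fun k => k.elim0, fun k => k.elim0, fun _ _ k => k.elim0⟩
  | succ d ih =>
    obtain ⟨q, hq, hq'⟩ := ih
    have hf : (⋃ k, C ∩ {p : Fin 2 → K | p 1 = q k 0 * p 0 + q k 1}).Finite :=
      Set.finite_iUnion fun k => hfin _ (hq k)
    obtain ⟨q0, h0, h0'⟩ := avoid hW hWn hf
    refine ⟨Fin.cons q0 q, fun k => ?_, fun p hp k k' => ?_⟩
    · refine Fin.cases ?_ (fun i => ?_) k
      · simpa using h0
      · simpa using hq i
    · refine Fin.cases ?_ (fun i => ?_) k <;> refine Fin.cases ?_ (fun i' => ?_) k'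
      · intros; rfl
      · intro h1 h2
        exact absurd h1 (h0' p (mem_iUnion.2 ⟨i', hp, by simpa using h2⟩))
      · intro h1 h2
        exact absurd h2 (h0' p (mem_iUnion.2 ⟨i, hp, by simpa using h1⟩))
      · intro h1 h2
        simp only [Fin.cons_succ] at h1 h2
        rw [hq' p hp i i' h1 h2]

theorem homog (f : MvPolynomial (Fin 2) K) (d : ℕ) (hd : f.totalDegree ≤ d) :
    ∃ F : (Fin 3 → K) → K, IsPoly F ∧ ∀ (p : Fin 2 → K) (t : K),
      F ![t * p 0, t * p 1, t] = t ^ d * MvPolynomial.eval p f := by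
  refine ⟨fun v => ∑ e ∈ f.support, f.coeff e * (v 0 ^ e 0 * v 1 ^ e 1) * v 2 ^ (d - (e 0 + e 1)),
    by fun_prop, fun p t => ?_⟩
  rw [MvPolynomial.eval_eq', Finset.mul_sum]
  refine Finset.sum_congr rfl fun e he => ?_
  have h1 : e 0 + e 1 ≤ d := by
    have := (MvPolynomial.le_totalDegree he).trans hd
    rw [Finsupp.sum_fintype _ _ (fun _ => rfl)] at this
    simpa using this
  rw [Fin.prod_univ_two]
  simp only [Matrix.cons_val]
  obtain ⟨c, rfl⟩ := Nat.exists_eq_add_of_le h1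
  rw [Nat.add_sub_cancel_left]
  ring

theorem divdiff (f : MvPolynomial (Fin 2) K) :
    ∃ Q R : (Fin 4 → K) → K, IsPoly Q ∧ IsPoly R ∧ ∀ p p' : Fin 2 → K,
      MvPolynomial.eval p' f - MvPolynomial.eval p f =
        (p' 0 - p 0) * Q ![p 0, p 1, p' 0, p' 1] + (p' 1 - p 1) * R ![p 0, p 1, p' 0, p' 1] := by
  induction f using MvPolynomial.induction_on with
  | C a => exact ⟨fun _ => 0, fun _ => 0, by fun_prop, by fun_prop, by simp⟩
  | add f g hf hg =>
    obtain ⟨Q, R, h1, h2, h3⟩ := hf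
    obtain ⟨Q', R', h1', h2', h3'⟩ := hg
    refine ⟨fun x => Q x + Q' x, fun x => R x + R' x, by fun_prop, by fun_prop, fun p p' => ?_⟩
    simp only [map_add]
    linear_combination h3 p p' + h3' p p'
  | mul_X f i hf =>
    obtain ⟨Q, R, h1, h2, h3⟩ := hf
    have hg : IsPoly (fun x : Fin 4 → K => MvPolynomial.eval ![x 0, x 1] f) :=
      IsPoly.eval f (by intro i; fin_cases i <;> simp <;> fun_prop)
    have hp : ∀ p : Fin 2 → K, ![p 0, p 1] = p := fun p => by
      funext i; fin_cases i <;> rfl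
    fin_cases i
    · refine ⟨fun x => x 2 * Q x + MvPolynomial.eval ![x 0, x 1] f, fun x => x 2 * R x,
        by fun_prop, by fun_prop, fun p p' => ?_⟩
      have := h3 p p'
      simp [hp] at this ⊢
      linear_combination (p' 0) * this
    · refine ⟨fun x => x 3 * Q x, fun x => x 3 * R x + MvPolynomial.eval ![x 0, x 1] f,
        by fun_prop, by fun_prop, fun p p' => ?_⟩
      have := h3 p p'
      simp [hp] at this ⊢
      linear_combination (p' 1) * this

/-- product of the line equations -/
noncomputable def ell {d : ℕ} (q : Fin d → Fin 2 → K) (s : Finset (Fin d)) : MvPolynomial (Fin 2) K :=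
  ∏ k ∈ s, (MvPolynomial.X 1 - MvPolynomial.C (q k 0) * MvPolynomial.X 0 - MvPolynomial.C (q k 1))

theorem ell_eval {d : ℕ} (q : Fin d → Fin 2 → K) (s : Finset (Fin d)) (p : Fin 2 → K) :
    MvPolynomial.eval p (ell q s) = ∏ k ∈ s, (p 1 - q k 0 * p 0 - q k 1) := by
  simp [ell, map_prod]

/-- points of the pencil -/
def rel (C : Set (Fin 2 → K)) (f l : MvPolynomial (Fin 2) K) (s : K) (p : Fin 2 → K) : Prop :=
  p ∈ C ∧ (1 - s) * MvPolynomial.eval p f + s * MvPolynomial.eval p l = 0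

def G4 (C : Set (Fin 2 → K)) (f l : MvPolynomial (Fin 2) K) : Set (Fin 4 → K) :=
  {v | ∃ s p t, rel C f l s p ∧ v = ![s, t * p 0, t * p 1, t]}

def G9 (C : Set (Fin 2 → K)) (f l : MvPolynomial (Fin 2) K) : Set (Fin 9 → K) :=
  {v | ∃ s p p' t u n, rel C f l s p ∧ rel C f l s p' ∧
    v = ![s, t * p 0, t * p 1, t, u * p' 0, u * p' 1, u, n * (p' 0 - p 0), n * (p' 1 - p 1)]}

def G7 (C : Set (Fin 2 → K)) (f l : MvPolynomial (Fin 2) K) : Set (Fin 7 → K) :=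
  {v | ∃ s p p' n, rel C f l s p ∧ rel C f l s p' ∧
    v = ![s, p 0, p 1, p' 0, p' 1, n * (p' 0 - p 0), n * (p' 1 - p 1)]}

theorem cone_scale {C : Set (Fin 2 → K)} {v : Fin 3 → K} (hv : v ∈ cone C) (t : K) :
    ![t * v 0, t * v 1, t * v 2] ∈ cone C := by
  refine mem_closure_map (poly_cont (Φ := fun v : Fin 3 → K => ![t * v 0, t * v 1, t * v 2]) (by
    intro i; fin_cases i <;> simp <;> fun_prop)) hv isClosed_closure ?_
  rintro _ ⟨p, hp, u, rfl⟩
  refine subset_closure ⟨p, hp, t * u, ?_⟩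
  simp [mul_assoc]

theorem lemB {C : Set (Fin 2 → K)} (hC : IsClosed C) {f : MvPolynomial (Fin 2) K} {d : ℕ}
    (hd : f.totalDegree ≤ d) (q : Fin d → Fin 2 → K) (hq1 : ∀ k, ![1, q k 0, 0] ∉ cone C)
    {v : Fin 4 → K} (hv : v ∈ closure (G4 C f (ell q Finset.univ))) (h0 : v 0 = 1)
    (hne : v 1 ≠ 0 ∨ v 2 ≠ 0 ∨ v 3 ≠ 0) :
    v 3 ≠ 0 ∧ ![v 1 / v 3, v 2 / v 3] ∈ C ∧
      ∃ k, v 2 / v 3 = q k 0 * (v 1 / v 3) + q k 1 := by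
  obtain ⟨F, hF, hFe⟩ := homog f d hd
  have hF' : IsPoly (fun v : Fin 4 → K => F ![v 1, v 2, v 3]) :=
    hF.comp (by intro i; fin_cases i <;> simp <;> fun_prop)
  have hrel : v ∈ {v : Fin 4 → K | (1 - v 0) * F ![v 1, v 2, v 3] +
      v 0 * ∏ k : Fin d, (v 2 - q k 0 * v 1 - q k 1 * v 3) = 0} := by
    refine (closed_zero (IsPoly.add (IsPoly.mul (by fun_prop) hF') (by fun_prop))).closure_subset_iff.2 ?_ hv
    rintro _ ⟨s, p, t, ⟨-, hr⟩, rfl⟩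
    simp only [mem_ofPred_eq, Matrix.cons_val]
    rw [hFe]
    have : ∏ k : Fin d, (t * p 1 - q k 0 * (t * p 0) - q k 1 * t) =
        t ^ d * ∏ k : Fin d, (p 1 - q k 0 * p 0 - q k 1) := by
      rw [show t ^ d = ∏ _k : Fin d, t by simp, ← Finset.prod_mul_distrib]
      exact Finset.prod_congr rfl fun k _ => by ring
    rw [this, ← ell_eval]
    linear_combination t ^ d * hr
  simp only [mem_ofPred_eq, h0, sub_self, zero_mul, one_mul, zero_add] at hrel
  obtain ⟨k, -, hk⟩ := Finset.prod_eq_zero_iff.1 hrel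
  have h3 : v 3 ≠ 0 := by
    intro h3
    rw [h3] at hk
    have h1 : v 1 ≠ 0 := by
      intro h1
      rw [h1] at hk
      simp only [mul_zero, sub_zero] at hk
      simp_all
    have hcone : ![v 1, v 2, v 3] ∈ cone C := by
      refine mem_closure_map (poly_cont (Φ := fun v : Fin 4 → K => ![v 1, v 2, v 3]) (by
        intro i; fin_cases i <;> simp <;> fun_prop)) hv isClosed_closure ?_
      rintro _ ⟨s, p, t, ⟨hp, -⟩, rfl⟩
      exact subset_closure ⟨p, hp, t, rfl⟩
    apply hq1 k
    have := cone_scale hcone (v 1)⁻¹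
    convert this using 1
    funext i
    fin_cases i
    · simp [h1]
    · simp
      field_simp
      linear_combination -hk
    · simp [h3]
  refine ⟨h3, ?_, k, ?_⟩
  · have := inv_closure hv 3 h3 (S := {z | ![z (Sum.inl 1) * z (Sum.inr ()),
      z (Sum.inl 2) * z (Sum.inr ())] ∈ C}) (hC.preimage (poly_cont (Φ := fun z : Fin 4 ⊕ Unit → K =>
        ![z (Sum.inl 1) * z (Sum.inr ()), z (Sum.inl 2) * z (Sum.inr ())]) (by
        intro i; fin_cases i <;> simp <;> fun_prop))) (by
      rintro _ ⟨s, p, t, ⟨hp, -⟩, rfl⟩ ht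
      have ht : t ≠ 0 := ht
      have he : ![t * p 0 * t⁻¹, t * p 1 * t⁻¹] = p := by
        funext i
        fin_cases i <;> simp <;> field_simp
      change ![t * p 0 * t⁻¹, t * p 1 * t⁻¹] ∈ C
      rw [he]
      exact hp)
    simpa [div_eq_mul_inv] using this
  · field_simp
    linear_combination hk

theorem lemC {C : Set (Fin 2 → K)} {f l : MvPolynomial (Fin 2) K}
    {w : Fin 9 → K} (hw : w ∈ closure (G9 C f l)) (h3 : w 3 ≠ 0) (h6 : w 6 ≠ 0) :
    ![w 0, w 1 / w 3, w 2 / w 3, w 4 / w 6, w 5 / w 6, w 7, w 8] ∈ closure (G7 C f l) := by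
  have h1 := inv_closure hw 3 h3 (S := closure {z | ∃ a ∈ G9 C f l, a 3 ≠ 0 ∧
    z = Sum.elim a (fun _ => (a 3)⁻¹)}) isClosed_closure (fun a ha ha' => subset_closure ⟨a, ha, ha', rfl⟩)
  let Φ : ((Fin 9 ⊕ Unit) ⊕ Unit → K) → (Fin 7 → K) := fun z =>
    ![z (Sum.inl (Sum.inl 0)), z (Sum.inl (Sum.inl 1)) * z (Sum.inl (Sum.inr ())),
      z (Sum.inl (Sum.inl 2)) * z (Sum.inl (Sum.inr ())), z (Sum.inl (Sum.inl 4)) * z (Sum.inr ()),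
      z (Sum.inl (Sum.inl 5)) * z (Sum.inr ()), z (Sum.inl (Sum.inl 7)), z (Sum.inl (Sum.inl 8))]
  have hΦ : Continuous Φ := poly_cont (by intro i; fin_cases i <;> simp [Φ] <;> fun_prop)
  have h2 := inv_closure h1 (Sum.inl 6) h6 (S := Φ ⁻¹' closure (G7 C f l))
    (isClosed_closure.preimage hΦ) (by
      rintro _ ⟨_, ⟨s, p, p', t, u, n, hp, hp', rfl⟩, ht, rfl⟩ hu
      have ht : t ≠ 0 := ht
      have hu : u ≠ 0 := hu
      refine subset_closure ⟨s, p, p', n, hp, hp', ?_⟩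
      funext i
      fin_cases i <;> simp [Φ] <;> field_simp)
  simpa [Φ, div_eq_mul_inv] using h2

theorem lemE {C : Set (Fin 2 → K)} {f : MvPolynomial (Fin 2) K} {d : ℕ}
    (q : Fin d → Fin 2 → K) (hq2 : ∀ k, q k ∉ tang C)
    (hq3 : ∀ p ∈ C, ∀ k k', p 1 = q k 0 * p 0 + q k 1 → p 1 = q k' 0 * p 0 + q k' 1 → k = k')
    {x y a b : K} (hp : ![x, y] ∈ C) (hab : a ≠ 0 ∨ b ≠ 0)
    (h : ![1, x, y, x, y, a, b] ∈ closure (G7 C f (ell q Finset.univ))) (k : Fin d)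
    (hk : y = q k 0 * x + q k 1) : False := by
  obtain ⟨Q, R, hQ, hR, hQR⟩ := divdiff f
  obtain ⟨Q', R', hQ', hR', hQR'⟩ := divdiff (ell q {k}ᶜ)
  have hsplit : ∀ p : Fin 2 → K, MvPolynomial.eval p (ell q Finset.univ) =
      (p 1 - q k 0 * p 0 - q k 1) * MvPolynomial.eval p (ell q {k}ᶜ) := by
    intro p
    rw [ell_eval, ell_eval, Fintype.prod_eq_mul_prod_compl k]
  let e : (Fin 7 → K) → (Fin 4 → K) := fun v => ![v 1, v 2, v 3, v 4]
  have he : ∀ i, IsPoly (fun v => e v i) := by intro i; fin_cases i <;> simp [e] <;> fun_prop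
  have c1 : IsPoly (fun v => Q (e v)) := hQ.comp he
  have c2 : IsPoly (fun v => R (e v)) := hR.comp he
  have c3 : IsPoly (fun v => Q' (e v)) := hQ'.comp he
  have c4 : IsPoly (fun v => R' (e v)) := hR'.comp he
  have c5 : IsPoly (fun v : Fin 7 → K => MvPolynomial.eval ![v 3, v 4] (ell q {k}ᶜ)) :=
    IsPoly.eval _ (by intro i; fin_cases i <;> simp <;> fun_prop)
  have hrel : ![1, x, y, x, y, a, b] ∈ {v : Fin 7 → K | (1 - v 0) * (v 5 * Q (e v) + v 6 * R (e v)) +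
      v 0 * ((v 6 - q k 0 * v 5) * MvPolynomial.eval ![v 3, v 4] (ell q {k}ᶜ) +
        (v 2 - q k 0 * v 1 - q k 1) * (v 5 * Q' (e v) + v 6 * R' (e v))) = 0} := by
    refine (closed_zero (IsPoly.add (IsPoly.mul (by fun_prop) (IsPoly.add (IsPoly.mul (by fun_prop) c1)
      (IsPoly.mul (by fun_prop) c2))) (IsPoly.mul (by fun_prop) (IsPoly.add
      (IsPoly.mul (by fun_prop) c5) (IsPoly.mul (by fun_prop) (IsPoly.add (IsPoly.mul (by fun_prop) c3)
      (IsPoly.mul (by fun_prop) c4))))))).closure_subset_iff.2 ?_ h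
    rintro _ ⟨s, p, p', n, ⟨-, hr⟩, ⟨-, hr'⟩, rfl⟩
    rw [hsplit] at hr hr'
    have e1 := hQR p p'
    have e2 := hQR' p p'
    have hp' : ![p' 0, p' 1] = p' := by funext i; fin_cases i <;> rfl
    simp only [hp'] at e1 e2
    simp only [mem_ofPred_eq, Matrix.cons_val, e, hp']
    linear_combination n * (hr' - hr) - n * (1 - s) * e1 - n * s * (p 1 - q k 0 * p 0 - q k 1) * e2
  have hk' : y - q k 0 * x - q k 1 = 0 := by linear_combination hk
  simp only [mem_ofPred_eq, Matrix.cons_val, sub_self, zero_mul, one_mul, zero_add, hk', add_zero,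
    ell_eval] at hrel
  have hne : ∏ k' ∈ ({k}ᶜ : Finset (Fin d)), (y - q k' 0 * x - q k' 1) ≠ 0 := by
    refine Finset.prod_ne_zero_iff.2 fun k' hk1 h0 => ?_
    have := hq3 _ hp k k' (by simpa using hk) (by simp; linear_combination h0)
    simp [this] at hk1
  have hb : b = q k 0 * a := by
    rcases mul_eq_zero.1 hrel with h1 | h1
    · linear_combination h1
    · exact absurd h1 hne
  have ha : a ≠ 0 := by
    rintro rfl
    simp_all
  have hsec : ![x, y, x, y, a, b] ∈ sec C := by
    have := mem_closure_map (poly_cont (Φ := fun v : Fin 7 → K => ![v 1, v 2, v 3, v 4, v 5, v 6]) (by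
        intro i; fin_cases i <;> simp <;> fun_prop)) h (R := sec C) isClosed_closure (by
      rintro _ ⟨s, p, p', n, ⟨hp, -⟩, ⟨hp', -⟩, rfl⟩
      exact subset_closure ⟨p, hp, p', hp', n, rfl⟩)
    exact this
  refine hq2 k (subset_closure ⟨x, y, ?_, by linear_combination -hk⟩)
  have := sec_scale hsec a⁻¹
  convert this using 1
  funext i
  fin_cases i <;> simp [hb, ha]
  field_simp

theorem lemD {C : Set (Fin 2 → K)} (hC : IsClosed C) (hCi : IsIrreducible C) (hC1 : ge 1 C)
    (f l : MvPolynomial (Fin 2) K)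
    (hfin : (C ∩ {p : Fin 2 → K | MvPolynomial.eval p f = 0}).Finite)
    {r : ℕ} (P : Fin r → Fin 2 → K) (hP : Function.Injective P) (hPC : ∀ i, P i ∈ C)
    (hPf : ∀ i, MvPolynomial.eval (P i) f = 0) :
    ∃ (V : Fin r → Fin 3 → K) (W : Fin r → Fin r → Fin 3 → K), (∀ i, V i ≠ 0) ∧
      (∀ i, ![1, V i 0, V i 1, V i 2] ∈ closure (G4 C f l)) ∧
      ∀ i j, i ≠ j → (W i j 0 ≠ 0 ∨ W i j 1 ≠ 0) ∧
        ![1, V i 0, V i 1, V i 2, V j 0, V j 1, V j 2, W i j 0, W i j 1] ∈ closure (G9 C f l) := by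
  classical
  let A : Option (Fin r) → Set (Fin 2 → K) := fun o => o.elim {v | v 1 = 0} (fun _ => C)
  have hA0 : IsIrreducible ({v | v 1 = 0} : Set (Fin 2 → K)) := by
    have : ({v | v 1 = 0} : Set (Fin 2 → K)) = (fun u : Unit → K => ![u (), 0]) '' univ := by
      ext v
      constructor
      · intro hv
        refine ⟨fun _ => v 0, trivial, ?_⟩
        funext i
        fin_cases i
        · rfl
        · exact Eq.symm hv
      · rintro ⟨u, -, rfl⟩
        rfl
    rw [this]
    exact univ_irr.image _ (poly_cont (by intro i; fin_cases i <;> simp <;> fun_prop)).continuousOn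
  obtain ⟨hpc, hpi, hpg⟩ := piSet_all A
    (by rintro (_ | i); exacts [closed_zero (f := fun v : Fin 2 → K => v 1) (by fun_prop), hC])
    (by rintro (_ | i); exacts [hA0, hCi])
    (by
      rintro (_ | i)
      · exact ⟨![0, 0], rfl, ![1, 0], rfl, fun h => by simpa using congrFun h 0⟩
      · exact ge_one_iff.1 hC1)
  let x0 : Option (Fin r) × Fin 2 → K := fun ot => ot.1.elim 0 (fun i => P i ot.2)
  let pt : Fin r → (Option (Fin r) × Fin 2 → K) → (Fin 2 → K) := fun i x t => x (some i, t)
  have hpt : ∀ i (g : MvPolynomial (Fin 2) K), IsPoly (fun x => MvPolynomial.eval (pt i x) g) :=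
    fun i g => IsPoly.eval g fun t => by fun_prop
  have hx0 : x0 ∈ piSet A := by
    rintro (_ | i)
    · rfl
    · exact hPC i
  obtain ⟨J, j1, j2, j3, j4, j5, j6⟩ := Sl_multi (Finset.univ : Finset (Fin r))
    (fun i x => (1 - x (none, 0)) * MvPolynomial.eval (pt i x) f +
      x (none, 0) * MvPolynomial.eval (pt i x) l = 0)
    (fun i => Sl_poly (IsPoly.add (IsPoly.mul (by fun_prop) (hpt i f)) (IsPoly.mul (by fun_prop) (hpt i l)))) hpc hpi
    (isIrreducible_singleton (x := x0)) (by rw [singleton_subset_iff]; exact hx0)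
    (by
      rintro i - _ rfl
      have : pt i x0 = P i := rfl
      simp only [this, hPf]
      simp [x0]) (n := 1) (by simpa [add_comm] using hpg)
  have hx0J : x0 ∈ J := j3 rfl
  have hJrel : ∀ x ∈ J, ∀ i, rel C f l (x (none, 0)) (pt i x) := fun x hx i =>
    ⟨j4 hx (some i), j5 i (Finset.mem_univ _) x hx⟩
  obtain ⟨y, hyJ, hy⟩ : ∃ y ∈ J, y (none, 0) ≠ 0 := by
    by_contra! hc
    refine irr_finite j2 ?_ j6
    have hS : (Set.pi univ (fun o : Option (Fin r) => o.elim ({0} : Set (Fin 2 → K))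
      (fun _ => C ∩ {p : Fin 2 → K | MvPolynomial.eval p f = 0}))).Finite := by
      refine Set.Finite.pi ?_
      rintro (_ | i)
      · exact finite_singleton _
      · exact hfin
    refine (hS.preimage (f := Function.curry) (Function.injective_iff_hasLeftInverse.2
      ⟨Function.uncurry, fun x => Function.uncurry_curry x⟩).injOn).subset ?_
    intro x hx
    rintro (_ | i) -
    · have h0 := hc x hx
      have h1 : x (none, 1) = 0 := j4 hx none
      change _ = _
      funext t
      fin_cases t
      · exact h0
      · exact h1
    · refine ⟨(hJrel x hx i).1, ?_⟩
      have := (hJrel x hx i).2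
      rw [hc x hx] at this
      simp only [sub_zero, one_mul, zero_mul, add_zero] at this
      exact this
  let φ : Fin r ⊕ (Fin r × Fin r) → (Option (Fin r) × Fin 2 → K) → Fin 3 → K := fun α x =>
    Sum.elim (fun i => ![x (some i, 0), x (some i, 1), 1])
      (fun ij => if ij.1 = ij.2 then ![1, 0, 0] else
        ![x (some ij.2, 0) - x (some ij.1, 0), x (some ij.2, 1) - x (some ij.1, 1), 0]) α
  obtain ⟨V, hV, hR⟩ := limit_lemma j2 (s := fun x => x (none, 0)) (by fun_prop) (φ := φ) (by
      rintro (i | ⟨i, j⟩) k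
      · fin_cases k <;> simp [φ] <;> fun_prop
      · by_cases h : i = j
        · simp only [φ, Sum.elim_inr, h, if_true]
          fun_prop
        · simp only [φ, Sum.elim_inr, h, if_false]
          fin_cases k <;> simp <;> fun_prop) hx0J (by
      rintro (i | ⟨i, j⟩) h
      · have := congrFun h 2
        simp [φ] at this
      · by_cases hij : i = j
        · have := congrFun h 0
          simp [φ, hij] at this
        · apply hij
          apply hP
          have h0 := congrFun h 0
          have h1 := congrFun h 1
          simp only [φ, Sum.elim_inr, hij, if_false, x0, Option.elim, Matrix.cons_val, Pi.zero_apply,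
            sub_eq_zero] at h0 h1
          funext t
          fin_cases t
          · exact h0.symm
          · exact h1.symm) hyJ hx0J (show y (none, 0) ≠ x0 (none, 0) from hy) 1
  refine ⟨fun i => V (Sum.inl i), fun i j => V (Sum.inr (i, j)), fun i => hV _, fun i => ?_,
    fun i j hij => ⟨?_, ?_⟩⟩
  · let Φ : (Option ((Fin r ⊕ (Fin r × Fin r)) × Fin 3) → K) → (Fin 4 → K) := fun z =>
      ![z none, z (some (Sum.inl i, 0)), z (some (Sum.inl i, 1)), z (some (Sum.inl i, 2))]
    have hΦ : Continuous Φ := poly_cont (by intro i; fin_cases i <;> simp [Φ] <;> fun_prop)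
    exact hR (Φ ⁻¹' closure (G4 C f l)) (isClosed_closure.preimage hΦ) (fun x hx c => subset_closure
      ⟨_, _, c (Sum.inl i), hJrel x hx i, by simp [Φ, φ, pt]⟩)
  · have h2 : V (Sum.inr (i, j)) 2 = 0 :=
      hR {z | z (some (Sum.inr (i, j), 2)) = 0} (closed_zero (by fun_prop)) (fun x hx c => by
        simp [φ, hij])
    by_contra! hc
    apply hV (Sum.inr (i, j))
    funext k
    fin_cases k
    · exact hc.1
    · exact hc.2
    · exact h2
  · let Φ : (Option ((Fin r ⊕ (Fin r × Fin r)) × Fin 3) → K) → (Fin 9 → K) := fun z =>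
      ![z none, z (some (Sum.inl i, 0)), z (some (Sum.inl i, 1)), z (some (Sum.inl i, 2)),
        z (some (Sum.inl j, 0)), z (some (Sum.inl j, 1)), z (some (Sum.inl j, 2)),
        z (some (Sum.inr (i, j), 0)), z (some (Sum.inr (i, j), 1))]
    have hΦ : Continuous Φ := poly_cont (by intro i; fin_cases i <;> simp [Φ] <;> fun_prop)
    exact hR (Φ ⁻¹' closure (G9 C f l)) (isClosed_closure.preimage hΦ) (fun x hx c => subset_closure
      ⟨_, _, _, c (Sum.inl i), c (Sum.inl j), c (Sum.inr (i, j)), hJrel x hx i, hJrel x hx j,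
        by simp [Φ, φ, pt, hij]⟩)

theorem main {C : Set (Fin 2 → K)} (hC : IsClosed C) (hCi : IsIrreducible C) (hC1 : ge 1 C)
    (hC2 : ¬ ge 2 C) (m : ℕ) (U : Set (Fin 2 → K)) (hUne : U.Nonempty) (hUo : IsOpen U)
    (hdeg : ∀ q ∈ U,
      (C ∩ {p : Fin 2 → K | p 1 = q 0 * p 0 + q 1}).Finite ∧
      (C ∩ {p : Fin 2 → K | p 1 = q 0 * p 0 + q 1}).ncard = m)
    (f : MvPolynomial (Fin 2) K) (d : ℕ) (hd : f.totalDegree ≤ d)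
    (hfin : (C ∩ {p : Fin 2 → K | MvPolynomial.eval p f = 0}).Finite) :
    (C ∩ {p : Fin 2 → K | MvPolynomial.eval p f = 0}).ncard ≤ d * m := by
  obtain ⟨b1, b1'⟩ := bad1 hC hCi hC2
  have b2 := bad2 hC hCi hC1 hC2
  have hirr := (univ_irr (K := K) (σ := Fin 2)).2
  have hb2o : IsOpen (tang C)ᶜ := isClosed_closure.isOpen_compl
  have n1 := hirr _ _ hUo b1.isOpen_compl (by simpa using hUne) (by
    rw [univ_inter]; exact nonempty_compl.2 b1')
  have n2 := hirr _ _ (hUo.inter b1.isOpen_compl) hb2o n1 (by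
    rw [univ_inter]; exact nonempty_compl.2 b2)
  rw [univ_inter] at n2
  obtain ⟨q, hq, hq3⟩ := lines (C := C) ((hUo.inter b1.isOpen_compl).inter hb2o) n2
    (fun q hq => (hdeg q hq.1.1).1) d
  by_contra! hlt
  have hfS := Set.finite_iUnion (fun k => (hdeg (q k) (hq k).1.1).1)
  have hS : (⋃ k, C ∩ {p : Fin 2 → K | p 1 = q k 0 * p 0 + q k 1}).ncard ≤ d * m := by
    refine (Set.ncard_iUnion_le_of_fintype _).trans ?_
    rw [Finset.sum_congr rfl (fun k _ => (hdeg (q k) (hq k).1.1).2)]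
    simp
  let P : Fin hfin.toFinset.card → Fin 2 → K := fun i => (hfin.toFinset.equivFin.symm i).1
  have hPm : ∀ i, P i ∈ C ∩ {p : Fin 2 → K | MvPolynomial.eval p f = 0} := fun i =>
    hfin.mem_toFinset.1 (hfin.toFinset.equivFin.symm i).2
  obtain ⟨V, W, hV, h4, h9⟩ := lemD hC hCi hC1 f (ell q Finset.univ) hfin P
    (Subtype.val_injective.comp (Equiv.injective _)) (fun i => (hPm i).1) (fun i => (hPm i).2)
  have hB := fun i => lemB hC hd q (fun k => (hq k).1.2) (h4 i) rfl (by
    by_contra! hc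
    apply hV i
    funext k
    fin_cases k
    · exact hc.1
    · exact hc.2.1
    · exact hc.2.2)
  simp only [Matrix.cons_val] at hB
  obtain ⟨i, -, j, -, hij, he⟩ := Finset.exists_ne_map_eq_of_card_lt_of_maps_to
    (s := (Finset.univ : Finset (Fin hfin.toFinset.card))) (t := hfS.toFinset)
    (f := fun i => ![V i 0 / V i 2, V i 1 / V i 2]) (by
      rw [← Set.ncard_eq_toFinset_card _ hfS, Finset.card_univ, Fintype.card_fin,
        ← Set.ncard_eq_toFinset_card _ hfin]
      omega) (by
      intro i _
      obtain ⟨-, hiC, k, hk⟩ := hB i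
      exact hfS.mem_toFinset.2 (mem_iUnion.2 ⟨k, hiC, hk⟩))
  obtain ⟨z1, hiC, k, hk⟩ := hB i
  obtain ⟨z2, -, -⟩ := hB j
  obtain ⟨hW, h9⟩ := h9 i j hij
  have h7 := lemC h9 z1 z2
  have e0 : V i 0 / V i 2 = V j 0 / V j 2 := congrFun he 0
  have e1 : V i 1 / V i 2 = V j 1 / V j 2 := congrFun he 1
  simp only [Matrix.cons_val, ← e0, ← e1] at h7
  exact lemE q (fun k => (hq k).2) hq3 hiC hW h7 k hk

end final
end BB

theorem plane_curve_bezout_bound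
    {K : Type*} [Field K] [IsAlgClosed K] (Z : ZariskiGeometry K)
    (hrefine : ∀ (n : ℕ) (C : Set (Fin n → K)), ZariskiClosedSet K C → IsClosed[Z.τ n] C)
    (C : Set (Fin 2 → K)) (hCcl : IsClosed[Z.τ 2] C)
    (hCirr : @IsIrreducible _ (Z.τ 2) C)
    (hCdim : setKrullDim (Z.τ 2) C = 1)
    (m : ℕ) (U : Set (Fin 2 → K)) (hUne : U.Nonempty)
    (hUopen : IsOpen[zariskiTopology K 2] U)
    (hdeg : ∀ q ∈ U,
      (C ∩ {p : Fin 2 → K | p 1 = q 0 * p 0 + q 1}).Finite ∧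
      (C ∩ {p : Fin 2 → K | p 1 = q 0 * p 0 + q 1}).ncard = m)
    (f : MvPolynomial (Fin 2) K) (hf : f ≠ 0) (d : ℕ) (hd : f.totalDegree = d)
    (hfin : (C ∩ {p : Fin 2 → K | MvPolynomial.eval p f = 0}).Finite) :
    (C ∩ {p : Fin 2 → K | MvPolynomial.eval p f = 0}).ncard ≤ d * m := by
  let _ : BB.HasZ K := ⟨Z, hrefine⟩
  have hle : Z.τ 2 ≤ zariskiTopology K 2 := le_generateFrom (fun V hV =>
    (@isClosed_compl_iff _ (Z.τ 2) V).1 (hrefine 2 _ hV))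
  have hUo := hle U hUopen
  have ht : (BB.topInst : TopologicalSpace (Fin 2 → K)) = Z.τ 2 := BB.top_fin 2
  rw [← ht] at hCcl hCirr hCdim hUo
  refine BB.main hCcl hCirr ?_ ?_ m U hUne hUo hdeg f d hd.le hfin
  · rw [BB.ge_iff_dim hCcl hCirr, hCdim]
    rfl
  · rw [BB.ge_iff_dim hCcl hCirr, hCdim]
    decide
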